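/- Let 2 ≤ q ≤ p < ∞ and s ≥ 0. There exists C > 0, depending only on φ, Φ, p, q, s, such that for every admissible finite collection 𝓘 = {[a_m,b_m]}_{m=1}^N and every Schwartz function f, one has ‖ ( Σ_{j∈ℤ} 2^{jsq} ( Σ_{m=1}^N |((f∗φ_m)∗ψ_j)(x)|² )^{q/2} )^{1/q} ‖_{L^p(dx)} ≤ C ‖ ( Σ_{j∈ℤ} (2^{js} |(f∗ψ_j)(x)|)^q )^{1/q} ‖_{L^p(dx)}. This is the uniform boundedness of the Rubio de Francia family WITHOUT rotations on the homogeneous Triebel–Lizorkin space Ḟ^s_{pq}. -/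

import Mathlib

open MeasureTheory Real Set Function
open scoped FourierTransform ENNReal NNReal

/-- `e2pi t = e^{2πit}`. -/
noncomputable def e2pi (t : ℝ) : ℂ := Complex.exp (2 * (Real.pi : ℂ) * Complex.I * (t : ℂ))

/-- Convolution of two functions on `ℝ`. -/
noncomputable def conv (f g : ℝ → ℂ) (x : ℝ) : ℂ := ∫ t, f t * g (x - t)

/-- The function `φ_m` associated with the interval `[a,b]`: its Fourier transform is
`ξ ↦ 𝓕φ ((ξ - a)/(b - a))`; in space variables it is `x ↦ (b-a) e^{2πiax} φ((b-a)x)`. -/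
noncomputable def phim (φ : ℝ → ℂ) (a b : ℝ) (x : ℝ) : ℂ :=
  ((b - a : ℝ) : ℂ) * e2pi (a * x) * φ ((b - a) * x)

/-- A finite collection of compact intervals `[a m, b m]` is admissible if the intervals are
nondegenerate, pairwise disjoint, and none of them contains `0` in its interior. -/
def Admissible {N : ℕ} (a b : Fin N → ℝ) : Prop :=
  (∀ m, a m < b m) ∧ (∀ m, (0 : ℝ) ∉ Set.Ioo (a m) (b m)) ∧
    ∀ m m', m ≠ m' → Disjoint (Set.Icc (a m) (b m)) (Set.Icc (a m') (b m'))

/-- The rotated Rubio de Francia piece `g_m(x) = e^{-2πi a x} (f ∗ φ_m)(x)`. -/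
noncomputable def rotConv (φ : ℝ → ℂ) (a b : ℝ) (f : ℝ → ℂ) (x : ℝ) : ℂ :=
  e2pi (-(a * x)) * conv f (phim φ a b) x

/-- Littlewood–Paley block `ψ_j`, whose Fourier transform is `ξ ↦ 𝓕Φ(2^{-j}ξ) - 𝓕Φ(2^{-j+1}ξ)`. -/
noncomputable def psi (Φ : ℝ → ℂ) (j : ℤ) (x : ℝ) : ℂ :=
  (((2:ℝ) ^ j : ℝ) : ℂ) * Φ ((2:ℝ) ^ j * x) - (((2:ℝ) ^ (j-1) : ℝ) : ℂ) * Φ ((2:ℝ) ^ (j-1) * x)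

/-!
Convolution with `φ_m` commutes with `ψ_j`, and modulations do not change absolute values, so the
theorem is a vector-valued inequality for the square function `S f = (∑ₘ |f ∗ φₘ|²) ^ (1 / 2)`
applied to the functions `F_j = 2 ^ (j * s) • (f ∗ ψ_j)`.

On `L²` it is Plancherel's theorem. Beyond `L²` the point is a smoothness estimate: after
demodulating each piece by the left endpoint of its frequency interval, the vector
`(e^{-2πi a_m x} f ∗ φₘ)ₘ` of a function supported off a ball of twice the radius oscillates on
the ball by at most an `L²` average of `f` against a kernel decaying like `d² / |t - x|³`. To see
this, group the intervals by dyadic length `2 ^ k`. Within a group the left endpoints are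
`2 ^ k`-separated up to bounded perturbation, hence Bessel's inequality on each interval of length
`2 ^ (-k)` controls the sum over `m`; integrating by parts in the perturbation removes it.
Consequently `∑ⱼ S(F_j) ^ q` is controlled on every ball, up to a local error governed by the
scalar `L^q` bound, by its own average and by the maximal function of `∑ⱼ |F_j| ^ q`, and a
good-`λ` inequality turns this into an `L^(p / q)` bound.

The argument runs twice: first from the `L²` bound with a single function, to get the scalar `L^q`
bound, and then with that bound as the local input, to get the vector-valued one.
-/

section LayerCake

variable {α : Type*} [MeasurableSpace α] {μ : Measure α} {r : ℝ}

theorem lintegral_Ioi_ofReal_rpow_eq_top (r : ℝ) :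
    ∫⁻ t in Ioi (0 : ℝ), ENNReal.ofReal (t ^ r) = ∞ := by
  by_contra h
  refine not_integrableOn_Ioi_rpow r ⟨(measurable_id.pow_const r).aestronglyMeasurable, ?_⟩
  rw [hasFiniteIntegral_iff_ofReal ((ae_restrict_iff' measurableSet_Ioi).2 <|
    .of_forall fun t (ht : 0 < t) => rpow_nonneg ht.le r)]
  exact lt_top_iff_ne_top.2 h

theorem lintegral_enn_rpow_eq_lintegral_meas_lt_mul {f : α → ℝ≥0∞} (hf : AEMeasurable f μ)
    (hr : 0 < r) :
    ∫⁻ x, f x ^ r ∂μ = ENNReal.ofReal r *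
      ∫⁻ t in Ioi (0 : ℝ), μ {x | ENNReal.ofReal t < f x} * ENNReal.ofReal (t ^ (r - 1)) := by
  by_cases hfin : ∀ᵐ x ∂μ, f x ≠ ∞
  · have hlevel : ∀ t : ℝ, 0 ≤ t → μ {x | ENNReal.ofReal t < f x} = μ {x | t < (f x).toReal} :=
      fun t ht => measure_congr <| hfin.mono fun x hx =>
        propext (ENNReal.ofReal_lt_iff_lt_toReal ht hx)
    rw [setLIntegral_congr_fun (g := fun t => μ {x | t < (f x).toReal} *
      ENNReal.ofReal (t ^ (r - 1))) measurableSet_Ioi fun t (ht : 0 < t) => by rw [hlevel t ht.le],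
      ← lintegral_rpow_eq_lintegral_meas_lt_mul μ (.of_forall fun _ => ENNReal.toReal_nonneg)
        hf.ennreal_toReal hr]
    refine lintegral_congr_ae (hfin.mono fun x hx => ?_)
    simp only
    rw [← ENNReal.ofReal_rpow_of_nonneg ENNReal.toReal_nonneg hr.le, ENNReal.ofReal_toReal hx]
  · have htop : μ {x | f x = ∞} ≠ 0 := by simpa [ae_iff] using hfin
    have hrpow : ∫⁻ x, f x ^ r ∂μ = ∞ := by
      by_contra h
      refine hfin ((ae_lt_top' (hf.pow_const r) h).mono fun x hx hx' => ?_)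
      simp [hx', hr] at hx
    have hle : ∫⁻ t in Ioi (0 : ℝ), μ {x | f x = ∞} * ENNReal.ofReal (t ^ (r - 1)) ≤
        ∫⁻ t in Ioi (0 : ℝ), μ {x | ENNReal.ofReal t < f x} * ENNReal.ofReal (t ^ (r - 1)) := by
      gcongr with t x
      intro hx
      simp [hx]
    rw [lintegral_const_mul _ (by fun_prop),
      lintegral_Ioi_ofReal_rpow_eq_top, ENNReal.mul_top htop, top_le_iff] at hle
    rw [hrpow, hle, ENNReal.mul_top (by simpa using hr)]

theorem lintegral_meas_mul_lt_mul_rpow {f : α → ℝ≥0∞} (hf : AEMeasurable f μ) (hr : 0 < r)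
    {c : ℝ≥0} (hc : c ≠ 0) :
    ENNReal.ofReal r *
      ∫⁻ t in Ioi (0 : ℝ), μ {x | c * ENNReal.ofReal t < f x} * ENNReal.ofReal (t ^ (r - 1)) =
      (c : ℝ≥0∞)⁻¹ ^ r * ∫⁻ x, f x ^ r ∂μ := by
  have hlevel : ∀ t : ℝ, {x | c * ENNReal.ofReal t < f x} =
      {x | ENNReal.ofReal t < (c : ℝ≥0∞)⁻¹ * f x} := fun t => by
    ext x
    rw [mem_ofPred_eq, mem_ofPred_eq, mul_comm (c : ℝ≥0∞)⁻¹, ← div_eq_mul_inv,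
      ENNReal.lt_div_iff_mul_lt (.inl (by simpa)) (.inl (by simp)), mul_comm]
  simp_rw [hlevel]
  rw [← lintegral_enn_rpow_eq_lintegral_meas_lt_mul (hf.const_mul _) hr,
    ← lintegral_const_mul'' _ (hf.pow_const r)]
  simp_rw [ENNReal.mul_rpow_of_nonneg _ _ hr.le]

theorem measure_lt_ne_top_of_lintegral_rpow_ne_top {f : α → ℝ≥0∞} (hf : AEMeasurable f μ)
    (hr : 0 < r) (hfin : ∫⁻ x, f x ^ r ∂μ ≠ ∞) {l : ℝ≥0∞} (hl : l ≠ 0) :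
    μ {x | l < f x} ≠ ∞ := by
  by_cases hl' : l = ∞
  · simp [hl']
  have hlr : l ^ r ≠ 0 := by simp [hl, hl']
  refine ne_top_of_le_ne_top (ENNReal.div_ne_top hfin hlr) <|
    (measure_mono fun x (hx : l < f x) => ENNReal.rpow_le_rpow hx.le hr.le).trans <|
      meas_ge_le_lintegral_div (hf.pow_const r) hlr
        (ENNReal.rpow_ne_top_of_nonneg hr.le hl')

theorem lintegral_rpow_withDensity_self {f : α → ℝ≥0∞} (hf : AEMeasurable f μ) (hr : 0 ≤ r) :
    ∫⁻ x, f x ^ r ∂μ.withDensity f = ∫⁻ x, f x ^ (r + 1) ∂μ := by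
  rw [lintegral_withDensity_eq_lintegral_mul₀ hf (hf.pow_const r)]
  refine lintegral_congr fun x => ?_
  rw [Pi.mul_apply, ENNReal.rpow_add_of_nonneg _ _ hr zero_le_one, ENNReal.rpow_one, mul_comm]

theorem lintegral_rpow_le_of_goodLambda {F G : α → ℝ≥0∞} (hF : AEMeasurable F μ)
    (hG : AEMeasurable G μ) (hr : 0 < r) {K g c : ℝ≥0} (hK : K ≠ 0) (hg : g ≠ 0)
    (hcK : 2 * c ≤ K ^ (-r)) (hfin : ∫⁻ x, F x ^ r ∂μ ≠ ∞)
    (hlevel : ∀ l : ℝ≥0∞, l ≠ 0 → l ≠ ∞ →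
      μ {x | K * l < F x} ≤ c * μ {x | l < F x} + μ {x | g * l < G x}) :
    ∫⁻ x, F x ^ r ∂μ ≤ 2 * (K : ℝ≥0∞) ^ r * (g : ℝ≥0∞)⁻¹ ^ r * ∫⁻ x, G x ^ r ∂μ := by
  set X := ∫⁻ x, F x ^ r ∂μ with hX
  set Y := (g : ℝ≥0∞)⁻¹ ^ r * ∫⁻ x, G x ^ r ∂μ with hY
  have hanti : Antitone fun t : ℝ => μ {x | ENNReal.ofReal t < F x} := fun s t hst =>
    measure_mono fun x (hx : _ < _) => (ENNReal.ofReal_le_ofReal hst).trans_lt hx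
  have hmeas : Measurable fun t : ℝ => (c : ℝ≥0∞) *
      (μ {x | ENNReal.ofReal t < F x} * ENNReal.ofReal (t ^ (r - 1))) :=
    (hanti.measurable.mul (by fun_prop)).const_mul _
  have hint : (K : ℝ≥0∞)⁻¹ ^ r * X ≤ c * X + Y := by
    rw [hY, ← lintegral_meas_mul_lt_mul_rpow hF hr hK, ← lintegral_meas_mul_lt_mul_rpow hG hr hg,
      hX, lintegral_enn_rpow_eq_lintegral_meas_lt_mul hF hr, mul_left_comm, ← mul_add,
      ← lintegral_const_mul' _ _ ENNReal.coe_ne_top, ← lintegral_add_left hmeas]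
    refine mul_le_mul_right (setLIntegral_mono' measurableSet_Ioi fun t (ht : 0 < t) => ?_) _
    rw [← mul_assoc, ← add_mul]
    exact mul_le_mul_left (hlevel _ (by simpa using ht) ENNReal.ofReal_ne_top) _
  have hKr : (K : ℝ≥0∞)⁻¹ ^ r = (K ^ (-r) : ℝ≥0) := by
    rw [← ENNReal.coe_inv hK, ← ENNReal.coe_rpow_of_nonneg _ hr.le, NNReal.inv_rpow,
      ← NNReal.rpow_neg]
  have habsorb : c * X ≤ Y := by
    refine (ENNReal.add_le_add_iff_left (ENNReal.mul_ne_top ENNReal.coe_ne_top hfin)).1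
      (le_trans ?_ hint)
    rw [hKr, ← two_mul, ← mul_assoc]
    gcongr
    exact_mod_cast hcK
  calc X = (K : ℝ≥0∞) ^ r * ((K : ℝ≥0∞)⁻¹ ^ r * X) := by
        rw [← mul_assoc, ← ENNReal.mul_rpow_of_nonneg _ _ hr.le,
          ENNReal.mul_inv_cancel (by simpa) (by simp), ENNReal.one_rpow, one_mul]
    _ ≤ (K : ℝ≥0∞) ^ r * (2 * Y) := by
        rw [two_mul]
        gcongr
        exact hint.trans (by gcongr)
    _ = _ := by rw [hY]; ring

end LayerCake

section MaximalFunction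

variable {X : Type*} [PseudoMetricSpace X] [MeasurableSpace X] {μ : Measure X}

/-- The uncentered Hardy–Littlewood maximal function of `h` with respect to `μ`: the supremum of
the averages of `h` over the open balls containing a given point. -/
noncomputable def maximalFunction (μ : Measure X) (h : X → ℝ≥0∞) (x : X) : ℝ≥0∞ :=
  ⨆ (c : X) (r : ℝ) (_ : x ∈ Metric.ball c r), ⨍⁻ t in Metric.ball c r, h t ∂μ

theorem lt_maximalFunction_iff {h : X → ℝ≥0∞} {x : X} {l : ℝ≥0∞} :
    l < maximalFunction μ h x ↔
      ∃ c r, x ∈ Metric.ball c r ∧ l < ⨍⁻ t in Metric.ball c r, h t ∂μ := by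
  simp only [maximalFunction, lt_iSup_iff, exists_prop]

theorem maximalFunction_le_essSup (h : X → ℝ≥0∞) (x : X) :
    maximalFunction μ h x ≤ essSup h μ :=
  iSup₂_le fun _ _ => iSup_le fun _ => setLAverage_le_essSup _ _

theorem setLAverage_ball_le_maximalFunction (h : X → ℝ≥0∞) {x c : X} {r : ℝ}
    (hx : x ∈ Metric.ball c r) : ⨍⁻ t in Metric.ball c r, h t ∂μ ≤ maximalFunction μ h x :=
  le_iSup_of_le c <| le_iSup₂_of_le r hx le_rfl

theorem isOpen_setOf_lt_maximalFunction (h : X → ℝ≥0∞) (l : ℝ≥0∞) :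
    IsOpen {x | l < maximalFunction μ h x} := by
  refine isOpen_iff_mem_nhds.2 fun x hx => ?_
  obtain ⟨c, r, hxc, hl⟩ := lt_maximalFunction_iff.1 hx
  filter_upwards [Metric.isOpen_ball.mem_nhds hxc] with y hy
  exact lt_maximalFunction_iff.2 ⟨c, r, hy, hl⟩

theorem measurable_maximalFunction [OpensMeasurableSpace X] (h : X → ℝ≥0∞) :
    Measurable (maximalFunction μ h) :=
  measurable_of_Ioi fun l => (isOpen_setOf_lt_maximalFunction h l).measurableSet

theorem setLIntegral_ball_le_measure_mul_maximalFunction [ProperSpace X]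
    [IsFiniteMeasureOnCompacts μ] (h : X → ℝ≥0∞) {x c : X} {r : ℝ} (hx : x ∈ Metric.ball c r) :
    ∫⁻ t in Metric.ball c r, h t ∂μ ≤ μ (Metric.ball c r) * maximalFunction μ h x := by
  rw [← measure_mul_setLAverage h measure_ball_lt_top.ne]
  exact mul_le_mul_right (setLAverage_ball_le_maximalFunction h hx) _

theorem lt_setLAverage_ball_iff [ProperSpace X] [IsFiniteMeasureOnCompacts μ]
    [μ.IsOpenPosMeasure] {h : X → ℝ≥0∞} {c : X} {r : ℝ} (hr : 0 < r) {l : ℝ≥0∞} :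
    l < ⨍⁻ t in Metric.ball c r, h t ∂μ ↔
      l * μ (Metric.ball c r) < ∫⁻ t in Metric.ball c r, h t ∂μ := by
  rw [setLAverage_eq]
  exact ENNReal.lt_div_iff_mul_lt (.inl (Metric.measure_ball_pos μ c hr).ne')
    (.inl measure_ball_lt_top.ne)

theorem le_maximalFunction [ProperSpace X] [OpensMeasurableSpace X] [IsFiniteMeasureOnCompacts μ]
    [μ.IsOpenPosMeasure] {h : X → ℝ≥0∞} (hh : LowerSemicontinuous h) (x : X) :
    h x ≤ maximalFunction μ h x := by
  refine le_of_forall_lt fun l hl => ?_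
  obtain ⟨l', hll', hl'⟩ := exists_between hl
  obtain ⟨r, hr, hball⟩ := Metric.mem_nhds_iff.1 (hh x l' hl')
  refine lt_maximalFunction_iff.2 ⟨x, r, Metric.mem_ball_self hr, hll'.trans_le ?_⟩
  rw [← setLAverage_const (Metric.measure_ball_pos μ x hr).ne' measure_ball_lt_top.ne l']
  exact laverage_mono_ae <|
    (ae_restrict_iff' measurableSet_ball).2 (.of_forall fun y hy => (hball hy).le)

theorem measure_le_mul_measure_biUnion_ball [TopologicalSpace.SeparableSpace X]
    [OpensMeasurableSpace X] {ι : Type*} {t : Set ι} {x : ι → X} {r : ι → ℝ} {R : ℝ}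
    (hr : ∀ a ∈ t, 0 < r a) (hR : ∀ a ∈ t, r a ≤ R) {S : Set X}
    (hS : S ⊆ ⋃ a ∈ t, Metric.ball (x a) (r a)) {ν : Measure X} {C : ℝ≥0∞}
    (hC : ∀ a ∈ t, μ (S ∩ Metric.ball (x a) (4 * r a)) ≤ C * ν (Metric.ball (x a) (r a))) :
    μ S ≤ C * ν (⋃ a ∈ t, Metric.ball (x a) (r a)) := by
  obtain ⟨u, hut, hdisj, hcover⟩ :=
    Vitali.exists_disjoint_subfamily_covering_enlargement_ball t x r R hR 4 (by norm_num)
  have hcount : u.Countable := hdisj.countable_of_isOpen (fun _ _ => Metric.isOpen_ball)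
    fun a ha => ⟨x a, Metric.mem_ball_self (hr a (hut ha))⟩
  have hSu : S ⊆ ⋃ a ∈ u, S ∩ Metric.ball (x a) (4 * r a) := fun y hy => by
    obtain ⟨a, ha, hya⟩ := mem_iUnion₂.1 (hS hy)
    obtain ⟨b, hb, hab⟩ := hcover a ha
    exact mem_biUnion hb ⟨hy, hab hya⟩
  calc μ S ≤ ∑' a : u, μ (S ∩ Metric.ball (x a) (4 * r a)) :=
        (measure_mono hSu).trans (measure_biUnion_le μ hcount _)
    _ ≤ ∑' a : u, C * ν (Metric.ball (x a) (r a)) :=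
        ENNReal.tsum_le_tsum fun a => hC a (hut a.2)
    _ = C * ν (⋃ a ∈ u, Metric.ball (x a) (r a)) := by
        rw [ENNReal.tsum_mul_left, measure_biUnion hcount hdisj fun _ _ => measurableSet_ball]
    _ ≤ _ := mul_le_mul_right (measure_mono (biUnion_subset_biUnion_left hut)) _

end MaximalFunction

section HardyLittlewood

variable {E : Type*} [NormedAddCommGroup E] [NormedSpace ℝ E] [FiniteDimensional ℝ E]
  [MeasurableSpace E] [BorelSpace E] {μ : Measure E} [μ.IsAddHaarMeasure]

local notation "dim" => Module.finrank ℝ E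

theorem addHaar_ball_mul_eq_pow_mul (x : E) {k : ℝ≥0} (hk : 0 < k) (r : ℝ) :
    μ (Metric.ball x (k * r)) = (k : ℝ≥0∞) ^ dim * μ (Metric.ball x r) := by
  rw [Measure.addHaar_ball_mul_of_pos μ x (by exact_mod_cast hk), ← Measure.addHaar_ball_center μ x,
    ENNReal.ofReal_pow k.coe_nonneg, ENNReal.ofReal_coe_nnreal]

theorem setLAverage_ball_le_of_dist_lt (h : E → ℝ≥0∞) {x z : E} {k : ℝ≥0} (hk : 1 ≤ k) {r : ℝ}
    (hr : 0 < r) (hz : dist z x < k * r) :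
    ⨍⁻ t in Metric.ball x r, h t ∂μ ≤ (k : ℝ≥0∞) ^ dim * maximalFunction μ h z := by
  have hle : r ≤ k * r := le_mul_of_one_le_left hr.le (by exact_mod_cast hk)
  rw [setLAverage_eq]
  refine ENNReal.div_le_of_le_mul ?_
  calc ∫⁻ t in Metric.ball x r, h t ∂μ ≤ ∫⁻ t in Metric.ball x (k * r), h t ∂μ :=
        lintegral_mono_set (Metric.ball_subset_ball hle)
    _ ≤ μ (Metric.ball x (k * r)) * maximalFunction μ h z :=
        setLIntegral_ball_le_measure_mul_maximalFunction h (Metric.mem_ball.2 hz)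
    _ = _ := by rw [addHaar_ball_mul_eq_pow_mul x (one_pos.trans_le hk)]; ring

variable [Nontrivial E]

theorem exists_forall_radius_le_of_measure_ball_le (μ : Measure E) [μ.IsAddHaarMeasure]
    {V : ℝ≥0∞} (hV : V ≠ ∞) : ∃ R, ∀ (c : E) (r : ℝ), μ (Metric.ball c r) ≤ V → r ≤ R := by
  have hunit : μ (Metric.ball 0 1) ≠ 0 := (Metric.measure_ball_pos μ 0 one_pos).ne'
  refine ⟨max 1 (V / μ (Metric.ball 0 1)).toReal, fun c r hle => le_max_iff.2 ?_⟩
  refine or_iff_not_imp_left.2 fun hr => ?_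
  have hr1 : 1 ≤ r := (not_le.1 hr).le
  rw [Measure.addHaar_ball μ c (by linarith),
    ← ENNReal.le_div_iff_mul_le (.inl hunit) (.inl measure_ball_lt_top.ne),
    ENNReal.ofReal_le_iff_le_toReal (ENNReal.div_ne_top hV hunit)] at hle
  exact (le_self_pow₀ hr1 Module.finrank_pos.ne').trans hle

theorem measure_lt_maximalFunction_le (h : E → ℝ≥0∞) {l : ℝ≥0∞} (hl : l ≠ 0) (hl' : l ≠ ∞) :
    μ {x | l < maximalFunction μ h x} ≤ 4 ^ dim / l * ∫⁻ t, h t ∂μ := by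
  by_cases hI : ∫⁻ t, h t ∂μ = ∞
  · rw [hI, ENNReal.mul_top (by simp [hl'])]
    exact le_top
  obtain ⟨R, hR⟩ := exists_forall_radius_le_of_measure_ball_le μ (ENNReal.div_ne_top hI hl)
  set t : Set (E × ℝ) :=
    {a | 0 < a.2 ∧ l * μ (Metric.ball a.1 a.2) < ∫⁻ t in Metric.ball a.1 a.2, h t ∂μ}
  have hradius : ∀ a ∈ t, a.2 ≤ R := fun a ha => hR a.1 a.2 <| by
    rw [ENNReal.le_div_iff_mul_le (.inl hl) (.inl hl'), mul_comm]
    exact ha.2.le.trans (setLIntegral_le_lintegral _ _)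
  have hcover : {x | l < maximalFunction μ h x} ⊆ ⋃ a ∈ t, Metric.ball a.1 a.2 := fun x hx => by
    obtain ⟨c, r, hxc, hlt⟩ := lt_maximalFunction_iff.1 hx
    have hr := Metric.pos_of_mem_ball hxc
    exact mem_biUnion (show (c, r) ∈ t from ⟨hr, (lt_setLAverage_ball_iff hr).1 hlt⟩) hxc
  refine (measure_le_mul_measure_biUnion_ball (fun a ha => ha.1) hradius hcover
    (ν := μ.withDensity h) (C := 4 ^ dim / l) fun a ha => ?_).trans ?_
  · calc μ (_ ∩ Metric.ball a.1 (4 * a.2)) ≤ μ (Metric.ball a.1 ((4 : ℝ≥0) * a.2)) :=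
          measure_mono inter_subset_right
      _ = 4 ^ dim / l * (l * μ (Metric.ball a.1 a.2)) := by
          rw [addHaar_ball_mul_eq_pow_mul a.1 (by norm_num), ← mul_assoc,
            ENNReal.div_mul_cancel hl hl']
          rfl
      _ ≤ _ := by
          rw [withDensity_apply _ measurableSet_ball]
          exact mul_le_mul_right ha.2.le _
  · rw [← setLIntegral_univ, ← withDensity_apply _ MeasurableSet.univ]
    exact mul_le_mul_right (measure_mono (subset_univ _)) _

theorem measure_lt_maximalFunction_le_setLIntegral {h : E → ℝ≥0∞} (hm : AEMeasurable h μ)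
    {l : ℝ≥0∞} (hl : l ≠ 0) (hl' : l ≠ ∞) :
    μ {x | l < maximalFunction μ h x} ≤ 2 * 4 ^ dim / l * ∫⁻ t in {t | l / 2 < h t}, h t ∂μ := by
  have hS : NullMeasurableSet {t | l / 2 < h t} μ := nullMeasurableSet_lt aemeasurable_const hm
  have hl2 : l / 2 ≠ ∞ := ENNReal.div_ne_top hl' two_ne_zero
  set big : E → ℝ≥0∞ := {t | l / 2 < h t}.indicator h with hbig
  have hsplit : ∀ t, h t ≤ big t + l / 2 := fun t => by
    by_cases ht : l / 2 < h t
    · rw [hbig, indicator_of_mem (by exact ht)]; exact le_self_add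
    · exact (not_lt.1 ht).trans le_add_self
  have hsub : {x | l < maximalFunction μ h x} ⊆ {x | l / 2 < maximalFunction μ big x} := by
    intro x hx
    obtain ⟨c, r, hxc, hlt⟩ := lt_maximalFunction_iff.1 hx
    refine lt_maximalFunction_iff.2 ⟨c, r, hxc, (ENNReal.add_lt_add_iff_right hl2).1 ?_⟩
    calc l / 2 + l / 2 = l := ENNReal.add_halves l
      _ < ⨍⁻ t in Metric.ball c r, h t ∂μ := hlt
      _ ≤ ⨍⁻ t in Metric.ball c r, (big t + l / 2) ∂μ := lintegral_mono hsplit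
      _ = (⨍⁻ t in Metric.ball c r, big t ∂μ) + l / 2 := by
        have hpos := (Metric.measure_ball_pos μ c (Metric.pos_of_mem_ball hxc)).ne'
        conv_rhs => rw [← setLAverage_const hpos measure_ball_lt_top.ne (l / 2)]
        exact lintegral_add_right _ measurable_const
  calc μ {x | l < maximalFunction μ h x} ≤ 4 ^ dim / (l / 2) * ∫⁻ t, big t ∂μ :=
        (measure_mono hsub).trans <|
          measure_lt_maximalFunction_le big (ENNReal.div_ne_zero.2 ⟨hl, ENNReal.ofNat_ne_top⟩) hl2
    _ = _ := by
        rw [hbig, lintegral_indicator₀ hS, div_eq_mul_inv, div_eq_mul_inv, div_eq_mul_inv,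
          ENNReal.mul_inv (.inr (by simp)) (.inr (by simp)), inv_inv]
        ring

theorem exists_lintegral_maximalFunction_rpow_le (μ : Measure E) [μ.IsAddHaarMeasure] {r : ℝ}
    (hr : 1 < r) : ∃ C : ℝ≥0∞, C ≠ ∞ ∧ ∀ h : E → ℝ≥0∞, AEMeasurable h μ →
      ∫⁻ x, maximalFunction μ h x ^ r ∂μ ≤ C * ∫⁻ x, h x ^ r ∂μ := by
  have hr1 : 0 < r - 1 := sub_pos.2 hr
  have hr' : ENNReal.ofReal (r - 1) ≠ 0 := by simpa using hr
  refine ⟨ENNReal.ofReal r * (2 * 4 ^ dim * ((ENNReal.ofReal (r - 1))⁻¹ * 2 ^ (r - 1))), by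
    finiteness, fun h hm => ?_⟩
  have hlevel : ∀ t ∈ Ioi (0 : ℝ),
      μ {x | ENNReal.ofReal t < maximalFunction μ h x} * ENNReal.ofReal (t ^ (r - 1)) ≤
        2 * 4 ^ dim * (μ.withDensity h {x | ENNReal.ofReal t / 2 < h x} *
          ENNReal.ofReal (t ^ (r - 1 - 1))) := fun t (ht : 0 < t) => by
    rw [withDensity_apply₀ _ (nullMeasurableSet_lt aemeasurable_const hm),
      rpow_sub_one ht.ne' (r - 1), ENNReal.ofReal_div_of_pos ht]
    refine (mul_le_mul_left (measure_lt_maximalFunction_le_setLIntegral hm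
      (l := ENNReal.ofReal t) (by simpa using ht) ENNReal.ofReal_ne_top) _).trans_eq ?_
    simp only [div_eq_mul_inv]
    ring
  have hlayer := lintegral_meas_mul_lt_mul_rpow (c := 2⁻¹) (r := r - 1)
    (hm.mono_ac (withDensity_absolutelyContinuous μ h)) hr1 (by norm_num)
  simp only [ENNReal.coe_inv two_ne_zero, ENNReal.coe_ofNat, inv_inv, ← ENNReal.div_eq_inv_mul,
    lintegral_rpow_withDensity_self hm hr1.le, sub_add_cancel] at hlayer
  rw [lintegral_enn_rpow_eq_lintegral_meas_lt_mul (measurable_maximalFunction h).aemeasurable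
    (one_pos.trans hr), mul_assoc, mul_assoc (2 * _), mul_assoc _ (2 ^ _), ← hlayer,
    ← mul_assoc _⁻¹, ENNReal.inv_mul_cancel hr' ENNReal.ofReal_ne_top, one_mul,
    ← lintegral_const_mul' (2 * 4 ^ dim) _ (by finiteness)]
  exact mul_le_mul_right (setLIntegral_mono' measurableSet_Ioi hlevel) _

end HardyLittlewood

section GoodLambda

variable {E : Type*} [NormedAddCommGroup E] [NormedSpace ℝ E] [FiniteDimensional ℝ E]
  [MeasurableSpace E] [BorelSpace E] {μ : Measure E} [μ.IsAddHaarMeasure]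

local notation "dim" => Module.finrank ℝ E

/-- `v` is locally controlled by `h`: on each ball `B`, up to a function whose total mass is at most
`A * μ B * M h`, the values of `v` are bounded by the average of `v` over `B` plus `M h`, where
`M h` is the maximal function of `h` at the centre of `B`. -/
def LocallyControlled (μ : Measure E) (A : ℝ≥0) (v h : E → ℝ≥0∞) : Prop :=
  ∀ (x : E) (d : ℝ), 0 < d → ∃ w : E → ℝ≥0∞,
    ∫⁻ t, w t ∂μ ≤ A * μ (Metric.ball x d) * maximalFunction μ h x ∧
      ∀ y ∈ Metric.ball x d,
        v y ≤ A * (w y + (⨍⁻ t in Metric.ball x d, v t ∂μ) + maximalFunction μ h x)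

theorem LocallyControlled.of_forall_forall_le {A : ℝ≥0} {v h : E → ℝ≥0∞}
    (H : ∀ x : E, ∀ d > 0, ∃ w : E → ℝ≥0∞, AEMeasurable w μ ∧
      ∫⁻ y, w y ∂μ ≤ A * μ (Metric.ball x d) * maximalFunction μ h x ∧
      ∀ y ∈ Metric.ball x d, ∀ y' ∈ Metric.ball x d,
        v y ≤ A * (w y + w y' + v y' + maximalFunction μ h x)) :
    LocallyControlled μ (A * (1 + A)) v h := by
  intro x d hd
  obtain ⟨w, hw, hwint, hvw⟩ := H x d hd
  have hB : μ (Metric.ball x d) ≠ 0 := (Metric.measure_ball_pos μ x hd).ne'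
  have hB' : μ (Metric.ball x d) ≠ ∞ := measure_ball_lt_top.ne
  have hwavg : ⨍⁻ y in Metric.ball x d, w y ∂μ ≤ A * maximalFunction μ h x := by
    rw [setLAverage_eq]
    refine ENNReal.div_le_of_le_mul ((setLIntegral_le_lintegral _ _).trans (hwint.trans_eq ?_))
    ring
  refine ⟨w, ?_, fun y hy => ?_⟩
  · grw [hwint]
    push_cast
    gcongr
    exact le_mul_of_one_le_right' le_self_add
  · have hvy : ∀ᵐ y' ∂μ.restrict (Metric.ball x d),
        v y ≤ A * (w y + maximalFunction μ h x + (w y' + v y')) :=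
      (ae_restrict_iff' measurableSet_ball).2 (.of_forall fun y' hy' =>
        (hvw y hy y' hy').trans_eq (by ring))
    calc v y = ⨍⁻ _ in Metric.ball x d, v y ∂μ := (setLAverage_const hB hB' _).symm
      _ ≤ ⨍⁻ y' in Metric.ball x d, A * (w y + maximalFunction μ h x + (w y' + v y')) ∂μ :=
          laverage_mono_ae hvy
      _ = A * (w y + maximalFunction μ h x + (⨍⁻ y' in Metric.ball x d, w y' ∂μ
            + ⨍⁻ y' in Metric.ball x d, v y' ∂μ)) := by
          rw [laverage, lintegral_const_mul' _ _ ENNReal.coe_ne_top,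
            lintegral_add_left' aemeasurable_const,
            lintegral_add_left' (hw.restrict.smul_measure _)]
          congr 3
          exact setLAverage_const hB hB' _
      _ ≤ A * (w y + maximalFunction μ h x + (A * maximalFunction μ h x
            + ⨍⁻ y' in Metric.ball x d, v y' ∂μ)) := by grw [hwavg]
      _ = A * (w y + ⨍⁻ y' in Metric.ball x d, v y' ∂μ + maximalFunction μ h x
            + A * maximalFunction μ h x) := by ring
      _ ≤ (A * (1 + A) : ℝ≥0)
            * (w y + ⨍⁻ y' in Metric.ball x d, v y' ∂μ + maximalFunction μ h x) := by
          rw [ENNReal.coe_mul, ENNReal.coe_add, ENNReal.coe_one, mul_assoc, one_add_mul]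
          gcongr
          exact le_add_self

theorem lt_maximalFunction_of_forall_le_mul_add {A : ℝ≥0} {v w : E → ℝ≥0∞} {b l m L : ℝ≥0∞}
    {x y z : E} {d : ℝ} (hz : dist z x ≤ d) (hyx : y ∈ Metric.ball x (d / 2))
    (hv : ∀ t ∈ Metric.ball x d, v t ≤ A * w t + b) (hvz : maximalFunction μ v z ≤ l)
    (hl : 8 ^ dim * l ≤ L) (hm : A * m + b ≤ L) (hy : L < maximalFunction μ v y) :
    m < maximalFunction μ w y := by
  obtain ⟨c, r, hyc, hlt⟩ := lt_maximalFunction_iff.1 hy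
  have hr := Metric.pos_of_mem_ball hyc
  refine lt_maximalFunction_iff.2 ⟨c, r, hyc, ?_⟩
  rw [Metric.mem_ball] at hyx hyc
  have hsmall : r < d / 4 := by
    by_contra! hcon
    have hzc := (dist_triangle4 z x y c).trans_eq (by rw [dist_comm x y])
    have havg := setLAverage_ball_le_of_dist_lt (μ := μ) v (k := 8) (by norm_num) hr
      (show dist z c < (8 : ℝ≥0) * r by push_cast; linarith)
    exact hlt.not_ge (havg.trans <| (mul_le_mul_right hvz _).trans hl)
  have hcd : Metric.ball c r ⊆ Metric.ball x d := Metric.ball_subset_ball' <| by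
    linarith [dist_triangle_left c x y]
  by_contra! hcon
  refine hlt.not_ge ?_
  calc ⨍⁻ t in Metric.ball c r, v t ∂μ
      ≤ ⨍⁻ t in Metric.ball c r, (A * w t + b) ∂μ :=
        laverage_mono_ae <| (ae_restrict_iff' measurableSet_ball).2 <|
          .of_forall fun t ht => hv t (hcd ht)
    _ = A * (⨍⁻ t in Metric.ball c r, w t ∂μ) + b := by
        conv_rhs => rw [← setLAverage_const (Metric.measure_ball_pos μ c hr).ne'
          measure_ball_lt_top.ne b]
        rw [laverage, laverage, laverage, ← lintegral_const_mul' _ _ ENNReal.coe_ne_top]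
        exact lintegral_add_right _ measurable_const
    _ ≤ A * m + b := by gcongr
    _ ≤ L := hm

theorem LocallyControlled.measure_inter_ball_le [Nontrivial E] {A : ℝ≥0} {v h : E → ℝ≥0∞}
    (hvh : LocallyControlled μ A v h) {l g : ℝ≥0∞} (hl : l ≠ 0) (hl' : l ≠ ∞) (hg : g ≤ 1)
    {x z : E} {d : ℝ} (hd : 0 < d) (hz : dist z x ≤ d) (hvz : maximalFunction μ v z ≤ l)
    (hhx : maximalFunction μ h x ≤ g * l) :
    μ ({y | (8 ^ dim + A * (2 ^ dim + 2)) * l < maximalFunction μ v y} ∩ Metric.ball x (d / 2)) ≤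
      32 ^ dim * A * g * μ (Metric.ball x (d / 8)) := by
  obtain ⟨w, hw, hvw⟩ := hvh x d hd
  have hhl : maximalFunction μ h x ≤ l := hhx.trans (mul_le_of_le_one_left' hg)
  have hv : ∀ y ∈ Metric.ball x d, v y ≤ A * w y + A * (2 ^ dim + 1) * l := fun y hy => by
    have havg := setLAverage_ball_le_of_dist_lt (μ := μ) v (k := 2) (by norm_num) hd
      (show dist z x < (2 : ℝ≥0) * d by push_cast; linarith)
    calc v y ≤ A * (w y + 2 ^ dim * l + l) := by
          refine (hvw y hy).trans ?_
          gcongr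
          exact havg.trans (mul_le_mul_right hvz _)
      _ = _ := by ring
  have hsub : {y | (8 ^ dim + A * (2 ^ dim + 2)) * l < maximalFunction μ v y} ∩
      Metric.ball x (d / 2) ⊆ {y | l < maximalFunction μ w y} := fun y ⟨hy, hyx⟩ =>
    lt_maximalFunction_of_forall_le_mul_add hz hyx hv hvz (mul_le_mul_left le_self_add l)
      (le_of_eq_of_le (by ring) (mul_le_mul_left le_add_self l)) hy
  calc _ ≤ 4 ^ dim / l * (A * μ (Metric.ball x d) * (g * l)) :=
        (measure_mono hsub).trans <| (measure_lt_maximalFunction_le w hl hl').trans <|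
          mul_le_mul_right (hw.trans (mul_le_mul_right hhx _)) _
    _ = 4 ^ dim / l * l * (A * g * μ (Metric.ball x d)) := by ring
    _ = 4 ^ dim * A * g * μ (Metric.ball x ((8 : ℝ≥0) * (d / 8))) := by
        rw [ENNReal.div_mul_cancel hl hl', show (8 : ℝ≥0) * (d / 8) = d by push_cast; ring]
        ring
    _ = _ := by
        rw [addHaar_ball_mul_eq_pow_mul x (by norm_num), show (32 : ℝ≥0∞) = 4 * 8 by norm_num,
          mul_pow, ENNReal.coe_ofNat]
        ring

theorem LocallyControlled.measure_lt_maximalFunction_le [Nontrivial E] {A : ℝ≥0}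
    {v h : E → ℝ≥0∞} (hvh : LocallyControlled μ A v h) {l g : ℝ≥0∞} (hl : l ≠ 0) (hl' : l ≠ ∞)
    (hg : g ≤ 1) (hfin : μ {y | l < maximalFunction μ v y} ≠ ∞) :
    μ {y | (8 ^ dim + A * (2 ^ dim + 2)) * l < maximalFunction μ v y} ≤
      32 ^ dim * A * g * μ {y | l < maximalFunction μ v y} +
        μ {y | g * l < maximalFunction μ h y} := by
  set O := {y | l < maximalFunction μ v y}
  set δ : E → ℝ := fun x => Metric.infDist x Oᶜ
  set S := {y | (8 ^ dim + A * (2 ^ dim + 2)) * l < maximalFunction μ v y} ∩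
    {y | maximalFunction μ h y ≤ g * l}
  have hclosed : IsClosed Oᶜ := (isOpen_setOf_lt_maximalFunction v l).isClosed_compl
  have hne : Oᶜ.Nonempty := by
    refine nonempty_compl.2 fun hcon => hfin ?_
    rw [hcon]
    exact measure_univ_of_isAddLeftInvariant μ
  have hSO : S ⊆ O := fun y hy =>
    (le_mul_of_one_le_left' <|
      (one_le_pow₀ (M₀ := ℝ≥0∞) (a := 8) (by norm_num)).trans le_self_add).trans_lt hy.1
  have hδ : ∀ x ∈ S, 0 < δ x := fun x hx =>
    (hclosed.notMem_iff_infDist_pos hne).1 (not_not.2 (hSO hx))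
  have hball : ∀ x ∈ S, Metric.ball x (δ x / 8) ⊆ O := fun x hx =>
    (Metric.ball_subset_ball (by linarith [hδ x hx])).trans
      (disjoint_compl_right_iff_subset.1 Metric.disjoint_ball_infDist)
  obtain ⟨R, hR⟩ := exists_forall_radius_le_of_measure_ball_le μ hfin
  have hlocal : ∀ x ∈ S, μ (S ∩ Metric.ball x (4 * (δ x / 8))) ≤
      32 ^ dim * A * g * μ (Metric.ball x (δ x / 8)) := fun x hx => by
    obtain ⟨z, hzO, hz⟩ := hclosed.exists_infDist_eq_dist hne x
    rw [show 4 * (δ x / 8) = δ x / 2 by ring]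
    exact (measure_mono (inter_subset_inter_left _ inter_subset_left)).trans <|
      hvh.measure_inter_ball_le hl hl' hg (hδ x hx) (dist_comm z x ▸ hz.ge) (not_lt.1 hzO) hx.2
  have hSO' : μ S ≤ 32 ^ dim * A * g * μ O :=
    (measure_le_mul_measure_biUnion_ball (fun x hx => by linarith [hδ x hx])
      (fun x hx => hR x _ (measure_mono (hball x hx)))
      (fun x hx => mem_biUnion hx (Metric.mem_ball_self (by linarith [hδ x hx]))) hlocal).trans
      (mul_le_mul_right (measure_mono (iUnion₂_subset hball)) _)
  refine (measure_mono fun y hy => ?_).trans ((measure_union_le S _).trans (add_le_add_left hSO' _))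
  exact (le_or_gt (maximalFunction μ h y) (g * l)).imp (fun hle => ⟨hy, hle⟩) id

theorem exists_lintegral_maximalFunction_rpow_le_of_locallyControlled [Nontrivial E]
    (μ : Measure E) [μ.IsAddHaarMeasure] (A : ℝ≥0) {r : ℝ} (hr : 1 < r) :
    ∃ C : ℝ≥0∞, C ≠ ∞ ∧ ∀ v h : E → ℝ≥0∞, AEMeasurable v μ → AEMeasurable h μ →
      LocallyControlled μ A v h → ∫⁻ x, v x ^ r ∂μ ≠ ∞ →
        ∫⁻ x, maximalFunction μ v x ^ r ∂μ ≤ C * ∫⁻ x, h x ^ r ∂μ := by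
  obtain ⟨C, hC, hstrong⟩ := exists_lintegral_maximalFunction_rpow_le μ hr
  have hr0 : 0 < r := one_pos.trans hr
  set K : ℝ≥0 := 8 ^ dim + A * (2 ^ dim + 2) with hK
  have hKpos : 0 < K := by positivity
  set g : ℝ≥0 := min 1 (K ^ (-r) / (2 * 32 ^ dim * A + 1))
  have hgpos : 0 < g := lt_min one_pos (div_pos (NNReal.rpow_pos hKpos) (by positivity))
  have hgK : 2 * (32 ^ dim * A * g) ≤ K ^ (-r) := by
    have hle : g * (2 * 32 ^ dim * A + 1) ≤ K ^ (-r) :=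
      (le_div_iff₀ (by positivity)).1 (min_le_right 1 _)
    rw [show 2 * (32 ^ dim * A * g) = g * (2 * 32 ^ dim * A) by ring]
    exact (mul_le_mul_right le_self_add g).trans hle
  refine ⟨2 * (K : ℝ≥0∞) ^ r * (g : ℝ≥0∞)⁻¹ ^ r * C, ?_, fun v h hv hh hvh hfin => ?_⟩
  · have : (g : ℝ≥0∞)⁻¹ ≠ ∞ := by simpa using hgpos.ne'
    finiteness
  have hMfin : ∫⁻ x, maximalFunction μ v x ^ r ∂μ ≠ ∞ :=
    ne_top_of_le_ne_top (ENNReal.mul_ne_top hC hfin) (hstrong v hv)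
  have hlevel : ∀ l : ℝ≥0∞, l ≠ 0 → l ≠ ∞ → μ {x | K * l < maximalFunction μ v x} ≤
      (32 ^ dim * A * g : ℝ≥0) * μ {x | l < maximalFunction μ v x} +
        μ {x | g * l < maximalFunction μ h x} := fun l hl hl' => by
    have := hvh.measure_lt_maximalFunction_le hl hl' (g := g) (by exact_mod_cast min_le_left 1 _)
      (measure_lt_ne_top_of_lintegral_rpow_ne_top (measurable_maximalFunction v).aemeasurable hr0
        hMfin hl)
    rw [hK]
    push_cast
    exact this
  calc _ ≤ 2 * (K : ℝ≥0∞) ^ r * (g : ℝ≥0∞)⁻¹ ^ r * ∫⁻ x, maximalFunction μ h x ^ r ∂μ :=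
        lintegral_rpow_le_of_goodLambda (measurable_maximalFunction v).aemeasurable
          (measurable_maximalFunction h).aemeasurable hr0 hKpos.ne' hgpos.ne' hgK hMfin hlevel
    _ ≤ _ := by
        rw [mul_assoc _ C]
        exact mul_le_mul_right (hstrong h hh) _

end GoodLambda

section Inequalities

variable {α : Type*}

theorem sq_lintegral_mul_le [MeasurableSpace α] (μ : Measure α) {f g : α → ℝ≥0∞}
    (hf : AEMeasurable f μ) (hg : AEMeasurable g μ) :
    (∫⁻ a, f a * g a ∂μ) ^ 2 ≤ (∫⁻ a, f a ^ 2 ∂μ) * ∫⁻ a, g a ^ 2 ∂μ := by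
  have h := ENNReal.lintegral_mul_le_Lp_mul_Lq μ Real.HolderConjugate.two_two hf hg
  simp only [Pi.mul_apply, ENNReal.rpow_two] at h
  refine (pow_le_pow_left' h 2).trans_eq ?_
  rw [mul_pow, ← ENNReal.rpow_two, ← ENNReal.rpow_two, ← ENNReal.rpow_mul, ← ENNReal.rpow_mul]
  norm_num

theorem sq_tsum_mul_le [Countable α] (f g : α → ℝ≥0∞) :
    (∑' a, f a * g a) ^ 2 ≤ (∑' a, f a ^ 2) * ∑' a, g a ^ 2 := by
  let _ : MeasurableSpace α := ⊤
  simpa only [lintegral_count] using sq_lintegral_mul_le (Measure.count (α := α))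
    (measurable_of_countable f).aemeasurable (measurable_of_countable g).aemeasurable

theorem ennreal_add_sq_le (a b : ℝ≥0∞) : (a + b) ^ 2 ≤ 2 * (a ^ 2 + b ^ 2) := by
  have := ENNReal.rpow_add_le_mul_rpow_add_rpow a b (p := 2) (by norm_num)
  norm_num at this
  exact this

theorem lintegral_rpow_le_measure_univ_rpow_mul [MeasurableSpace α] {μ : Measure α}
    {f : α → ℝ≥0∞} (hf : AEMeasurable f μ) {r : ℝ} (hr : 1 ≤ r) :
    (∫⁻ x, f x ∂μ) ^ r ≤ μ univ ^ (r - 1) * ∫⁻ x, f x ^ r ∂μ := by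
  have hr₀ : 0 < r := one_pos.trans_le hr
  have hnorm := eLpNorm'_le_eLpNorm'_mul_rpow_measure_univ one_pos hr hf.aestronglyMeasurable
  simp only [eLpNorm'_eq_lintegral_enorm, enorm_eq_self, ENNReal.rpow_one, one_div_one] at hnorm
  calc (∫⁻ x, f x ∂μ) ^ r ≤ ((∫⁻ x, f x ^ r ∂μ) ^ (1 / r) * μ univ ^ (1 - 1 / r)) ^ r := by gcongr
    _ = μ univ ^ (r - 1) * ∫⁻ x, f x ^ r ∂μ := by
        rw [ENNReal.mul_rpow_of_nonneg _ _ hr₀.le, ← ENNReal.rpow_mul, ← ENNReal.rpow_mul,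
          one_div_mul_cancel hr₀.ne', ENNReal.rpow_one, mul_comm, sub_mul,
          one_div_mul_cancel hr₀.ne', one_mul]

theorem ennreal_rpow_add_add_add_le (a b c d : ℝ≥0∞) {r : ℝ} (hr : 1 ≤ r) :
    (a + b + c + d) ^ r ≤ 4 ^ (r - 1) * (a ^ r + b ^ r + c ^ r + d ^ r) := by
  simpa [Fin.sum_univ_four] using
    ENNReal.rpow_sum_le_const_mul_sum_rpow (s := Finset.univ) (f := ![a, b, c, d]) hr

theorem lintegral_rpow_ne_top_of_forall_le [MeasurableSpace α] {μ : Measure α}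
    {h : α → ℝ≥0∞} {B : ℝ≥0∞} (hB : B ≠ ∞) (hle : ∀ x, h x ≤ B) (hh : ∫⁻ x, h x ∂μ ≠ ∞)
    {p : ℝ} (hp : 1 ≤ p) : ∫⁻ x, h x ^ p ∂μ ≠ ∞ := by
  have hp' : 0 ≤ p - 1 := sub_nonneg.2 hp
  refine ne_top_of_le_ne_top (ENNReal.mul_ne_top (ENNReal.rpow_ne_top_of_nonneg hp' hB) hh) ?_
  rw [← lintegral_const_mul' _ _ (ENNReal.rpow_ne_top_of_nonneg hp' hB)]
  refine lintegral_mono fun x => ?_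
  calc h x ^ p = h x ^ (p - 1) * h x := by
        simpa using ENNReal.rpow_add_of_nonneg (x := h x) _ _ hp' zero_le_one
    _ ≤ B ^ (p - 1) * h x := by
        gcongr
        exact hle x

end Inequalities

section Bessel

theorem norm_e2pi (t : ℝ) : ‖e2pi t‖ = 1 := by
  rw [e2pi, show 2 * (π : ℂ) * Complex.I * t = ((2 * π * t : ℝ) : ℂ) * Complex.I by push_cast; ring]
  exact Complex.norm_exp_ofReal_mul_I _

theorem enorm_e2pi (t : ℝ) : ‖e2pi t‖ₑ = 1 := by
  rw [← ofReal_norm, norm_e2pi, ENNReal.ofReal_one]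

theorem e2pi_add (s t : ℝ) : e2pi (s + t) = e2pi s * e2pi t := by
  rw [e2pi, e2pi, e2pi, ← Complex.exp_add]
  congr 1
  push_cast
  ring

theorem continuous_e2pi : Continuous e2pi := by
  unfold e2pi
  fun_prop

theorem hasDerivAt_e2pi_const_mul (c t : ℝ) :
    HasDerivAt (fun t => e2pi (c * t)) (2 * π * Complex.I * c * e2pi (c * t)) t := by
  have h : HasDerivAt (fun t : ℝ => 2 * (π : ℂ) * Complex.I * ((c * t : ℝ) : ℂ))
      (2 * π * Complex.I * c) t := by
    simpa using ((hasDerivAt_id t).const_mul c).ofReal_comp.const_mul (2 * (π : ℂ) * Complex.I)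
  unfold e2pi
  convert h.cexp using 1
  ring

variable {ι : Type*} [Fintype ι] {l T : ℝ} {u : ℝ → ℂ} {n : ι → ℤ}

theorem norm_sq_integral_e2pi_mul (hT : 0 < T) (u : ℝ → ℂ) (k : ℤ) :
    ‖∫ t in l..(l + T), e2pi (-(k * t / T)) * u t‖ ^ 2 =
      T ^ 2 * ‖fourierCoeffOn (lt_add_of_pos_right l hT) u k‖ ^ 2 := by
  rw [fourierCoeffOn_eq_integral, norm_smul, mul_pow, ← mul_assoc, add_sub_cancel_left,
    Real.norm_of_nonneg (by positivity), ← mul_pow, mul_one_div_cancel hT.ne', one_pow, one_mul]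
  congr 3
  ext t
  rw [smul_eq_mul, fourier_coe_apply, e2pi]
  congr 2
  push_cast
  field_simp

theorem sum_enorm_sq_integral_e2pi_mul_le (hT : 0 < T) (hn : Injective n)
    (hu : MemLp u 2 (volume.restrict (Ioc l (l + T)))) :
    ∑ m, ‖∫ t in l..(l + T), e2pi (-(n m * t / T)) * u t‖ₑ ^ 2 ≤
      ENNReal.ofReal T * ∫⁻ t in Ioc l (l + T), ‖u t‖ₑ ^ 2 := by
  have hlT : l < l + T := lt_add_of_pos_right l hT
  have bessel : ∑ m, ‖fourierCoeffOn hlT u (n m)‖ ^ 2 ≤ T⁻¹ * ∫ t in l..(l + T), ‖u t‖ ^ 2 := by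
    have hs := hasSum_sq_fourierCoeffOn hlT hu
    rw [add_sub_cancel_left, smul_eq_mul] at hs
    simpa only [Finset.sum_map, Embedding.coeFn_mk] using
      sum_le_hasSum (Finset.univ.map ⟨n, hn⟩) (fun _ _ => by positivity) hs
  have hreal : ∑ m, ‖∫ t in l..(l + T), e2pi (-(n m * t / T)) * u t‖ ^ 2 ≤
      T * ∫ t in Ioc l (l + T), ‖u t‖ ^ 2 := by
    simp_rw [norm_sq_integral_e2pi_mul hT, ← Finset.mul_sum]
    refine (mul_le_mul_of_nonneg_left bessel (by positivity)).trans_eq ?_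
    rw [intervalIntegral.integral_of_le hlT.le]
    field_simp
  have henn := ENNReal.ofReal_le_ofReal hreal
  rw [ENNReal.ofReal_sum_of_nonneg (fun _ _ => by positivity), ENNReal.ofReal_mul hT.le,
    ofReal_integral_eq_lintegral_ofReal (by simpa using hu.integrable_norm_pow two_ne_zero)
      (.of_forall fun _ => by positivity)] at henn
  simpa only [ENNReal.ofReal_pow (norm_nonneg _), ofReal_norm] using henn

theorem sum_enorm_sq_integral_e2pi_mul_le_of_mem_Icc (hT : 0 < T) (hn : Injective n)
    (hu : MemLp u 2 (volume.restrict (Ioc l (l + T)))) {s : ℝ} (hs : s ∈ Icc l (l + T)) :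
    ∑ m, ‖∫ t in s..(l + T), e2pi (-(n m * t / T)) * u t‖ₑ ^ 2 ≤
      ENNReal.ofReal T * ∫⁻ t in Ioc l (l + T), ‖u t‖ₑ ^ 2 := by
  have hcut (m : ι) : ∫ t in s..(l + T), e2pi (-(n m * t / T)) * u t =
      ∫ t in l..(l + T), e2pi (-(n m * t / T)) * (Ioi s).indicator u t := by
    have hmul (t : ℝ) : e2pi (-(n m * t / T)) * (Ioi s).indicator u t =
        (Ioi s).indicator (fun t => e2pi (-(n m * t / T)) * u t) t := by
      by_cases h : t ∈ Ioi s <;> simp [h]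
    simp_rw [hmul]
    rw [intervalIntegral.integral_of_le hs.2, intervalIntegral.integral_of_le (hs.1.trans hs.2),
      setIntegral_indicator measurableSet_Ioi, Ioc_inter_Ioi, max_eq_right hs.1]
  simp_rw [hcut]
  refine (sum_enorm_sq_integral_e2pi_mul_le hT hn (hu.indicator measurableSet_Ioi)).trans ?_
  gcongr
  exact enorm_indicator_le_enorm_self _ _

theorem integral_mul_eq_add_integral_deriv_mul_integral {A A' w : ℝ → ℂ} {a b : ℝ} (hab : a ≤ b)
    (hA : ∀ t, HasDerivAt A (A' t) t) (hA' : Continuous A')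
    (hw : IntervalIntegrable w volume a b) :
    ∫ t in a..b, A t * w t =
      A a * (∫ t in a..b, w t) + ∫ s in a..b, A' s * ∫ t in s..b, w t := by
  have hwI := (intervalIntegrable_iff_integrableOn_Ioc_of_le hab).1 hw
  have hA'I : IntegrableOn A' (Ioc a b) :=
    (hA'.continuousOn.integrableOn_compact isCompact_Icc).mono_set Ioc_subset_Icc_self
  have hAc : Continuous A := continuous_iff_continuousAt.2 fun t => (hA t).continuousAt
  let K (s t : ℝ) : ℂ := {z : ℝ × ℝ | z.1 < z.2}.indicator (fun z => A' z.1 * w z.2) (s, t)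
  have hswap : ∫ s in Ioc a b, ∫ t in Ioc a b, K s t = ∫ t in Ioc a b, ∫ s in Ioc a b, K s t :=
    integral_integral_swap
      ((hA'I.mul_prod hwI).indicator (measurableSet_lt measurable_fst measurable_snd))
  have hinner : ∀ s ∈ Ioc a b, ∫ t in Ioc a b, K s t = A' s * ∫ t in s..b, w t := by
    intro s hs
    have hK (t : ℝ) : K s t = A' s * (Ioi s).indicator w t := by
      by_cases h : s < t <;> simp [K, indicator, h]
    simp_rw [hK]
    rw [integral_const_mul, setIntegral_indicator measurableSet_Ioi, Ioc_inter_Ioi,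
      max_eq_right hs.1.le, intervalIntegral.integral_of_le hs.2]
  have houter : ∀ t ∈ Ioc a b, ∫ s in Ioc a b, K s t = A t * w t - A a * w t := by
    intro t ht
    have hK (s : ℝ) : K s t = (Iio t).indicator A' s * w t := by
      by_cases h : s < t <;> simp [K, indicator, h]
    have hcap : Ioc a b ∩ Iio t = Ioo a t := by
      ext s
      simp only [mem_inter_iff, mem_Ioc, mem_Iio, mem_Ioo]
      exact ⟨fun h => ⟨h.1.1, h.2⟩, fun h => ⟨⟨h.1, h.2.le.trans ht.2⟩, h.2⟩⟩
    simp_rw [hK]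
    rw [integral_mul_const, setIntegral_indicator measurableSet_Iio, hcap,
      ← integral_Ioc_eq_integral_Ioo, ← intervalIntegral.integral_of_le ht.1.le,
      intervalIntegral.integral_eq_sub_of_hasDerivAt (fun x _ => hA x)
        (hA'.intervalIntegrable _ _), sub_mul]
  rw [setIntegral_congr_fun measurableSet_Ioc hinner,
    setIntegral_congr_fun measurableSet_Ioc houter,
    ← intervalIntegral.integral_of_le hab, ← intervalIntegral.integral_of_le hab,
    intervalIntegral.integral_sub (hw.continuousOn_mul hAc.continuousOn) (hw.const_mul _),
    intervalIntegral.integral_const_mul] at hswap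
  rw [hswap]
  ring

theorem aemeasurable_enorm_integral_left {w : ℝ → ℂ} {a b : ℝ} (hab : a ≤ b)
    (hw : IntervalIntegrable w volume a b) :
    AEMeasurable (fun s => ‖∫ t in s..b, w t‖ₑ) (volume.restrict (Ioc a b)) := by
  have h := intervalIntegral.continuousOn_primitive_interval_left (μ := volume) (f := w)
    (a := a) (b := b) ((intervalIntegrable_iff' (by simp)).1 hw)
  rw [uIcc_of_le hab] at h
  exact ((h.mono Ioc_subset_Icc_self).aestronglyMeasurable measurableSet_Ioc).enorm

theorem enorm_sq_integral_mul_le {A A' w : ℝ → ℂ} {κ : ℝ≥0∞} (hT : 0 < T)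
    (hA : ∀ t, HasDerivAt A (A' t) t) (hA' : Continuous A')
    (hw : IntervalIntegrable w volume l (l + T)) (hAκ : ‖A l‖ₑ ≤ κ)
    (hA'κ : ∀ t ∈ Ioc l (l + T), ‖A' t‖ₑ ≤ κ / ENNReal.ofReal T) :
    ‖∫ t in l..(l + T), A t * w t‖ₑ ^ 2 ≤ 2 * κ ^ 2 * (‖∫ t in l..(l + T), w t‖ₑ ^ 2 +
      (∫⁻ s in Ioc l (l + T), ‖∫ t in s..(l + T), w t‖ₑ ^ 2) / ENNReal.ofReal T) := by
  have hlT : l ≤ l + T := le_add_of_nonneg_right hT.le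
  have hT0 : ENNReal.ofReal T ≠ 0 := by simpa using hT
  set W : ℝ → ℂ := fun s => ∫ t in s..(l + T), w t
  have hWm := aemeasurable_enorm_integral_left hlT hw
  have hvar : ‖∫ s in l..(l + T), A' s * W s‖ₑ ^ 2 ≤
      κ ^ 2 * ((∫⁻ s in Ioc l (l + T), ‖W s‖ₑ ^ 2) / ENNReal.ofReal T) := by
    have hle : ‖∫ s in l..(l + T), A' s * W s‖ₑ ≤
        κ / ENNReal.ofReal T * ∫⁻ s in Ioc l (l + T), 1 * ‖W s‖ₑ := by
      rw [intervalIntegral.integral_of_le hlT, ← lintegral_const_mul'' _ (by simpa using hWm)]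
      refine (enorm_integral_le_lintegral_enorm _).trans
        (setLIntegral_mono_ae' measurableSet_Ioc (.of_forall fun t ht => ?_))
      rw [enorm_mul, one_mul]
      exact mul_le_mul_left (hA'κ t ht) _
    have hcs := sq_lintegral_mul_le (volume.restrict (Ioc l (l + T)))
      (f := fun _ => 1) aemeasurable_const hWm
    rw [one_pow, setLIntegral_one, Real.volume_Ioc, add_sub_cancel_left] at hcs
    calc _ ≤ (κ / ENNReal.ofReal T) ^ 2 *
          (ENNReal.ofReal T * ∫⁻ s in Ioc l (l + T), ‖W s‖ₑ ^ 2) :=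
          (pow_le_pow_left' hle 2).trans (by rw [mul_pow]; gcongr)
      _ = _ := by
          rw [pow_two (κ / _), div_eq_mul_inv, div_eq_mul_inv, mul_assoc, mul_assoc, mul_assoc,
            ← mul_assoc (ENNReal.ofReal T)⁻¹ (ENNReal.ofReal T),
            ENNReal.inv_mul_cancel hT0 ENNReal.ofReal_ne_top]
          ring
  rw [integral_mul_eq_add_integral_deriv_mul_integral hlT hA hA' hw]
  calc _ ≤ (‖A l‖ₑ * ‖∫ t in l..(l + T), w t‖ₑ + ‖∫ s in l..(l + T), A' s * W s‖ₑ) ^ 2 := by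
        rw [← enorm_mul]
        exact pow_le_pow_left' (enorm_add_le _ _) 2
    _ ≤ _ := (ennreal_add_sq_le _ _).trans ?_
  rw [mul_assoc, mul_add (κ ^ 2), mul_pow]
  gcongr

theorem sum_enorm_sq_integral_mul_e2pi_mul_le (hT : 0 < T) (hn : Injective n)
    (hu : MemLp u 2 (volume.restrict (Ioc l (l + T)))) {A A' : ι → ℝ → ℂ} {κ : ℝ≥0∞}
    (hA : ∀ m t, HasDerivAt (A m) (A' m t) t) (hA' : ∀ m, Continuous (A' m))
    (hAκ : ∀ m, ‖A m l‖ₑ ≤ κ)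
    (hA'κ : ∀ m, ∀ t ∈ Ioc l (l + T), ‖A' m t‖ₑ ≤ κ / ENNReal.ofReal T) :
    ∑ m, ‖∫ t in l..(l + T), A m t * (e2pi (-(n m * t / T)) * u t)‖ₑ ^ 2 ≤
      4 * κ ^ 2 * ENNReal.ofReal T * ∫⁻ t in Ioc l (l + T), ‖u t‖ₑ ^ 2 := by
  set X := ∫⁻ t in Ioc l (l + T), ‖u t‖ₑ ^ 2
  let w (m : ι) (t : ℝ) : ℂ := e2pi (-(n m * t / T)) * u t
  have hlT : l ≤ l + T := le_add_of_nonneg_right hT.le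
  have hT0 : ENNReal.ofReal T ≠ 0 := by simpa using hT
  have hw (m : ι) : IntervalIntegrable (w m) volume l (l + T) :=
    ((intervalIntegrable_iff_integrableOn_Ioc_of_le hlT).2 (hu.integrable one_le_two)
      ).continuousOn_mul (continuous_e2pi.comp (by fun_prop)).continuousOn
  have htails : ∑ m, ∫⁻ s in Ioc l (l + T), ‖∫ t in s..(l + T), w m t‖ₑ ^ 2 ≤
      ENNReal.ofReal T * X * ENNReal.ofReal T := by
    rw [← lintegral_finsetSum' _ fun m _ =>
      (aemeasurable_enorm_integral_left hlT (hw m)).pow_const 2]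
    refine (setLIntegral_mono' measurableSet_Ioc fun s hs =>
      sum_enorm_sq_integral_e2pi_mul_le_of_mem_Icc hT hn hu (Ioc_subset_Icc_self hs)).trans_eq ?_
    rw [setLIntegral_const, Real.volume_Ioc, add_sub_cancel_left]
  calc _ ≤ ∑ m, 2 * κ ^ 2 * (‖∫ t in l..(l + T), w m t‖ₑ ^ 2 +
        (∫⁻ s in Ioc l (l + T), ‖∫ t in s..(l + T), w m t‖ₑ ^ 2) / ENNReal.ofReal T) :=
        Finset.sum_le_sum fun m _ =>
          enorm_sq_integral_mul_le hT (hA m) (hA' m) (hw m) (hAκ m) (hA'κ m)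
    _ ≤ 2 * κ ^ 2 * (ENNReal.ofReal T * X +
        ENNReal.ofReal T * X * ENNReal.ofReal T / ENNReal.ofReal T) := by
        simp_rw [div_eq_mul_inv]
        rw [← Finset.mul_sum, Finset.sum_add_distrib, ← Finset.sum_mul]
        gcongr
        exact sum_enorm_sq_integral_e2pi_mul_le hT hn hu
    _ = _ := by
        rw [ENNReal.mul_div_cancel_right hT0 ENNReal.ofReal_ne_top]
        ring

end Bessel

section TailMeasure

theorem tsum_ofReal_half_pow_natAbs_ne_top :
    ∑' n : ℤ, ENNReal.ofReal (2 * (1 / 2) ^ n.natAbs) ≠ ∞ := by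
  refine Summable.tsum_ofReal_ne_top (.of_nat_of_neg ?_ ?_) <;>
    simpa using summable_geometric_two.mul_left 2

theorem min_zpow_mul_inv_le {v : ℝ} (hv : 1 / 2 ≤ v) (hv' : v ≤ 1) (n : ℤ) :
    min (2 ^ n * v) (2 ^ n * v)⁻¹ ≤ 2 * (1 / 2) ^ n.natAbs := by
  obtain ⟨k, rfl | rfl⟩ := n.eq_nat_or_neg
  · refine (min_le_right _ _).trans ?_
    rw [mul_inv, Int.natAbs_natCast, zpow_natCast, one_div, inv_pow, mul_comm]
    gcongr
    exact inv_le_of_inv_le₀ two_pos (by linarith)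
  · refine (min_le_left _ _).trans ?_
    rw [Int.natAbs_neg, Int.natAbs_natCast, zpow_neg, zpow_natCast, one_div, inv_pow, mul_comm]
    gcongr
    linarith

theorem exists_zpow_mul_mem_Icc {R : ℝ} (hR : 0 < R) :
    ∃ k : ℤ, 1 / 2 ≤ (2 : ℝ) ^ k * R ∧ (2 : ℝ) ^ k * R ≤ 1 := by
  obtain ⟨k, hk, hk'⟩ := exists_mem_Ico_zpow (inv_pos.2 hR) (y := (2 : ℝ)) one_lt_two
  rw [zpow_add_one₀ two_ne_zero, inv_lt_iff_one_lt_mul₀ hR] at hk'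
  rw [le_inv_comm₀ (by positivity) hR] at hk
  refine ⟨k, by linarith, ?_⟩
  calc (2 : ℝ) ^ k * R ≤ 2 ^ k * (2 ^ k)⁻¹ := by gcongr
    _ = 1 := mul_inv_cancel₀ (by positivity)

theorem pow_three_div_one_add_pow_four_le_min {u : ℝ} (hu : 0 < u) :
    u ^ 3 / (1 + u) ^ 4 ≤ min u u⁻¹ := by
  refine le_min ?_ ?_
  · rw [div_le_iff₀ (by positivity)]
    nlinarith [one_le_pow₀ (by linarith : 1 ≤ 1 + u) (n := 2), sq_nonneg u, pow_pos hu 3,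
      mul_pos hu (pow_pos hu 3), mul_pos hu (pow_pos hu 4)]
  · rw [div_le_iff₀ (by positivity), inv_mul_eq_div, le_div_iff₀ hu]
    calc u ^ 3 * u = u ^ 4 := by ring
      _ ≤ (1 + u) ^ 4 := by gcongr; linarith

theorem exists_tsum_zpow_pow_three_div_le : ∃ C : ℝ≥0, ∀ R : ℝ, 0 < R →
    ∑' k : ℤ, ENNReal.ofReal (((2 : ℝ) ^ k) ^ 3 / (1 + (2 : ℝ) ^ k * R) ^ 4)
      ≤ C * ENNReal.ofReal (1 / R ^ 3) := by
  refine ⟨(∑' n : ℤ, ENNReal.ofReal (2 * (1 / 2) ^ n.natAbs)).toNNReal, fun R hR => ?_⟩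
  rw [ENNReal.coe_toNNReal tsum_ofReal_half_pow_natAbs_ne_top, ← ENNReal.tsum_mul_right]
  obtain ⟨k₀, hk₀, hk₀'⟩ := exists_zpow_mul_mem_Icc hR
  rw [← (Equiv.addRight k₀).tsum_eq]
  refine ENNReal.tsum_le_tsum fun n => ?_
  rw [← ENNReal.ofReal_mul (by positivity), Equiv.coe_addRight, zpow_add₀ two_ne_zero]
  refine ENNReal.ofReal_le_ofReal ?_
  calc ((2 : ℝ) ^ n * 2 ^ k₀) ^ 3 / (1 + 2 ^ n * 2 ^ k₀ * R) ^ 4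
      = (2 ^ n * (2 ^ k₀ * R)) ^ 3 / (1 + 2 ^ n * (2 ^ k₀ * R)) ^ 4 * (1 / R ^ 3) := by
        rw [← mul_assoc]; field_simp
    _ ≤ 2 * (1 / 2) ^ n.natAbs * (1 / R ^ 3) := by
        gcongr
        exact (pow_three_div_one_add_pow_four_le_min (by positivity)).trans
          (min_zpow_mul_inv_le hk₀ hk₀' n)

/-- The measure on `ℝ` with density `d ^ 2 / |t - x| ^ 3` off the ball of radius `d` around `x`.
Its total mass is bounded independently of `x` and `d`; it measures the influence of the far part
of a function on the oscillation of its square function near `x`. -/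
noncomputable def tailMeasure (x d : ℝ) : Measure ℝ :=
  (volume.restrict (Metric.ball x d)ᶜ).withDensity fun t => ENNReal.ofReal (d ^ 2 / |t - x| ^ 3)

theorem lintegral_tailMeasure (x d : ℝ) (h : ℝ → ℝ≥0∞) :
    ∫⁻ t, h t ∂tailMeasure x d
      = ∫⁻ t in (Metric.ball x d)ᶜ, ENNReal.ofReal (d ^ 2 / |t - x| ^ 3) * h t := by
  refine lintegral_withDensity_eq_lintegral_mul_non_measurable _ ?_ (by simp) h
  fun_prop

theorem compl_ball_subset_iUnion_annulus (x : ℝ) {d : ℝ} (hd : 0 < d) :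
    (Metric.ball x d)ᶜ ⊆ ⋃ i : ℕ, Metric.ball x (2 ^ (i + 1) * d) \ Metric.ball x (2 ^ i * d) := by
  intro t ht
  rw [mem_compl_iff, Metric.mem_ball, not_lt] at ht
  obtain ⟨i, hi, hi'⟩ := exists_nat_pow_near ((one_le_div hd).2 ht) (y := (2 : ℝ)) one_lt_two
  rw [le_div_iff₀ hd] at hi
  rw [div_lt_iff₀ hd] at hi'
  exact mem_iUnion.2 ⟨i, Metric.mem_ball.2 hi', fun h => (Metric.mem_ball.1 h).not_ge hi⟩

theorem setLIntegral_annulus_mul_le (x : ℝ) {d : ℝ} (hd : 0 < d) (h : ℝ → ℝ≥0∞) (i : ℕ) :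
    ∫⁻ t in Metric.ball x (2 ^ (i + 1) * d) \ Metric.ball x (2 ^ i * d),
        ENNReal.ofReal (d ^ 2 / |t - x| ^ 3) * h t
      ≤ ENNReal.ofReal (4 * (1 / 4) ^ i) * maximalFunction volume h x := by
  calc _ ≤ ∫⁻ t in Metric.ball x (2 ^ (i + 1) * d) \ Metric.ball x (2 ^ i * d),
          ENNReal.ofReal (d ^ 2 / (2 ^ i * d) ^ 3) * h t := by
        refine setLIntegral_mono' (measurableSet_ball.diff measurableSet_ball) fun t ht => ?_
        have hlow : 2 ^ i * d ≤ |t - x| := by simpa [Real.dist_eq] using ht.2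
        gcongr
    _ ≤ ENNReal.ofReal (d ^ 2 / (2 ^ i * d) ^ 3)
          * ∫⁻ t in Metric.ball x (2 ^ (i + 1) * d), h t := by
        rw [lintegral_const_mul' _ _ ENNReal.ofReal_ne_top]
        gcongr
        exact sdiff_subset
    _ ≤ ENNReal.ofReal (d ^ 2 / (2 ^ i * d) ^ 3)
          * (volume (Metric.ball x (2 ^ (i + 1) * d)) * maximalFunction volume h x) := by
        gcongr
        exact setLIntegral_ball_le_measure_mul_maximalFunction h
          (Metric.mem_ball_self (by positivity))
    _ = ENNReal.ofReal (4 * (1 / 4) ^ i) * maximalFunction volume h x := by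
        rw [Real.volume_ball, ← mul_assoc, ← ENNReal.ofReal_mul (by positivity)]
        congr 2
        rw [div_pow, one_pow, show (4 : ℝ) = 2 ^ 2 by norm_num, ← pow_mul, mul_comm 2 i, pow_mul]
        field_simp
        ring

theorem exists_lintegral_tailMeasure_le : ∃ C : ℝ≥0, ∀ (h : ℝ → ℝ≥0∞) (x d : ℝ), 0 < d →
    ∫⁻ t, h t ∂tailMeasure x d ≤ C * maximalFunction volume h x := by
  have hsum : Summable fun n : ℕ => (4 : ℝ) * (1 / 4) ^ n :=
    (summable_geometric_of_lt_one (by norm_num) (by norm_num)).mul_left 4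
  refine ⟨(∑' i : ℕ, 4 * (1 / 4 : ℝ) ^ i).toNNReal, fun h x d hd => ?_⟩
  calc ∫⁻ t, h t ∂tailMeasure x d
      ≤ ∑' i : ℕ, ∫⁻ t in Metric.ball x (2 ^ (i + 1) * d) \ Metric.ball x (2 ^ i * d),
          ENNReal.ofReal (d ^ 2 / |t - x| ^ 3) * h t := by
        rw [lintegral_tailMeasure]
        exact (lintegral_mono_set (compl_ball_subset_iUnion_annulus x hd)).trans
          (lintegral_iUnion_le _ _)
    _ ≤ ∑' i : ℕ, ENNReal.ofReal (4 * (1 / 4) ^ i) * maximalFunction volume h x :=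
        ENNReal.tsum_le_tsum fun i => setLIntegral_annulus_mul_le x hd h i
    _ = ENNReal.ofReal (∑' i : ℕ, 4 * (1 / 4) ^ i) * maximalFunction volume h x := by
        rw [ENNReal.tsum_mul_right, ENNReal.ofReal_tsum_of_nonneg (fun i => by positivity) hsum]

theorem exists_tailMeasure_univ_le :
    ∃ C : ℝ≥0, ∀ x d : ℝ, 0 < d → tailMeasure x d univ ≤ C := by
  obtain ⟨C, hC⟩ := exists_lintegral_tailMeasure_le
  refine ⟨C, fun x d hd => ?_⟩
  calc tailMeasure x d univ = ∫⁻ _, 1 ∂tailMeasure x d := by simp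
    _ ≤ C * maximalFunction volume 1 x := hC _ x d hd
    _ ≤ C := mul_le_of_le_one_right' <|
        (maximalFunction_le_essSup 1 x).trans (essSup_le_of_ae_le 1 (Filter.EventuallyLE.refl _ _))

end TailMeasure

section Nonoverlapping

/-- A family of nondegenerate intervals with endpoints `a m < b m` whose interiors are pairwise
disjoint. -/
structure IsNonoverlapping {ι : Type*} (a b : ι → ℝ) : Prop where
  lt : ∀ m, a m < b m
  disjoint : Pairwise (Disjoint on fun m => Ioo (a m) (b m))

variable {ι : Type*} {a b : ι → ℝ} {lam : ℝ}

theorem IsNonoverlapping.comp_injective (h : IsNonoverlapping a b) {κ : Type*} {e : κ → ι}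
    (he : Injective e) : IsNonoverlapping (a ∘ e) (b ∘ e) :=
  ⟨fun m => h.lt (e m), fun _ _ hne => h.disjoint (he.ne hne)⟩

theorem IsNonoverlapping.right_le_left (h : IsNonoverlapping a b) {m m' : ι} (hne : m ≠ m')
    (hle : a m ≤ a m') : b m ≤ a m' := by
  have hmin := Ioo_disjoint_Ioo.1 (h.disjoint hne)
  rw [max_eq_right hle, min_le_iff] at hmin
  exact hmin.resolve_right (h.lt m').not_ge

theorem IsNonoverlapping.injective_floor_div (h : IsNonoverlapping a b) (hlam : 0 < lam)
    (hlen : ∀ m, lam ≤ b m - a m) : Injective fun m => ⌊a m / lam⌋ := by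
  have floor_lt {m m' : ι} (hne : m ≠ m') (hle : a m ≤ a m') : ⌊a m / lam⌋ < ⌊a m' / lam⌋ := by
    rw [← Int.add_one_le_iff, ← Int.floor_add_one, div_add_one hlam.ne']
    gcongr
    linarith [hlen m, h.right_le_left hne hle]
  intro m m' heq
  by_contra hne
  rcases le_total (a m) (a m') with hle | hle
  · exact (floor_lt hne hle).ne heq
  · exact (floor_lt (Ne.symm hne) hle).ne' heq

end Nonoverlapping

section Kernel

theorem exists_norm_mul_one_add_abs_pow_le (G : SchwartzMap ℝ ℂ) (n : ℕ) :
    ∃ D, 0 < D ∧ ∀ x, ‖G x‖ * (1 + |x|) ^ n ≤ D := by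
  refine ⟨2 ^ n * (Finset.Iic (n, 0)).sup (fun m => SchwartzMap.seminorm ℝ m.1 m.2) G + 1,
    add_pos_of_nonneg_of_pos (mul_nonneg (by positivity) (apply_nonneg _ _)) one_pos, fun x => ?_⟩
  have hdecay := SchwartzMap.one_add_le_sup_seminorm_apply (𝕜 := ℝ) (m := (n, 0)) le_rfl le_rfl G x
  rw [norm_iteratedFDeriv_zero, Real.norm_eq_abs] at hdecay
  linarith

/-- The integral kernel of `f ↦ rotConv G θ (θ + ℓ) f`, depending on the length `ℓ` and the left
endpoint `θ` of the frequency interval separately. -/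
noncomputable def rotKernel (G : ℝ → ℂ) (ℓ θ y t : ℝ) : ℂ :=
  (ℓ : ℂ) * G (ℓ * (y - t)) * e2pi (-θ * t)

theorem rotConv_eq_integral_rotKernel (φ f : ℝ → ℂ) (a b y : ℝ) :
    rotConv φ a b f y = ∫ t, rotKernel φ (b - a) a y t * f t := by
  unfold rotConv conv phim rotKernel
  rw [← integral_const_mul]
  refine integral_congr_ae (.of_forall fun t => ?_)
  have hsplit : e2pi (-a * t) = e2pi (-(a * y)) * e2pi (a * (y - t)) := by
    rw [← e2pi_add]
    congr 1
    ring
  simp only [hsplit]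
  ring

theorem enorm_rotConv (φ f : ℝ → ℂ) (a b x : ℝ) :
    ‖rotConv φ a b f x‖ₑ = ‖conv f (phim φ a b) x‖ₑ := by
  rw [rotConv, enorm_mul, enorm_e2pi, one_mul]

theorem rotKernel_add (G : ℝ → ℂ) (ℓ θ η y t : ℝ) :
    rotKernel G ℓ (θ + η) y t = rotKernel G ℓ θ y t * e2pi (-(η * t)) := by
  rw [rotKernel, rotKernel, mul_assoc _ (e2pi _), ← e2pi_add]
  ring_nf

theorem rotKernel_sub_mul_eq_demodulate (G : ℝ → ℂ) (ℓ θ η y y' t : ℝ) (z : ℂ) :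
    (rotKernel G ℓ θ y t - rotKernel G ℓ θ y' t) * z
      = (rotKernel G ℓ (θ - η) y t - rotKernel G ℓ (θ - η) y' t) * (e2pi (-(η * t)) * z) := by
  have hshift (y : ℝ) : rotKernel G ℓ θ y t = rotKernel G ℓ (θ - η) y t * e2pi (-(η * t)) := by
    rw [← rotKernel_add, sub_add_cancel]
  rw [hshift y, hshift y']
  ring

theorem contDiff_rotKernel (G : SchwartzMap ℝ ℂ) (ℓ θ y : ℝ) :
    ContDiff ℝ 1 (rotKernel G ℓ θ y) := by
  have hG : ContDiff ℝ 1 G := G.smooth 1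
  have hcast : ContDiff ℝ 1 ((↑) : ℝ → ℂ) := Complex.ofRealCLM.contDiff
  unfold rotKernel e2pi
  fun_prop

theorem hasDerivAt_rotKernel (G : SchwartzMap ℝ ℂ) (ℓ θ y t : ℝ) :
    HasDerivAt (rotKernel G ℓ θ y)
      (-ℓ * rotKernel (SchwartzMap.derivCLM ℝ ℂ G) ℓ θ y t
        + 2 * π * Complex.I * (-θ : ℝ) * rotKernel G ℓ θ y t) t := by
  have hG : HasDerivAt (fun t => G (ℓ * (y - t))) (((-ℓ : ℝ) : ℂ) * deriv G (ℓ * (y - t))) t := by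
    simpa [Function.comp_def] using
      (G.hasDerivAt (ℓ * (y - t))).scomp t (((hasDerivAt_id t).const_sub y).const_mul ℓ)
  refine HasDerivAt.congr_deriv (f := rotKernel G ℓ θ y)
    ((hG.const_mul (ℓ : ℂ)).mul (hasDerivAt_e2pi_const_mul (-θ) t)) ?_
  simp only [rotKernel, SchwartzMap.derivCLM_apply]
  push_cast
  ring

theorem integrable_rotKernel_mul (G : SchwartzMap ℝ ℂ) {f : ℝ → ℂ} (hf : Integrable f)
    (ℓ θ y : ℝ) : Integrable fun t => rotKernel G ℓ θ y t * f t := by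
  obtain ⟨D, -, hD⟩ := exists_norm_mul_one_add_abs_pow_le G 0
  refine hf.bdd_mul (c := |ℓ| * D) (contDiff_rotKernel G ℓ θ y).continuous.aestronglyMeasurable
    (.of_forall fun t => ?_)
  rw [rotKernel, norm_mul, norm_e2pi, mul_one, norm_mul, Complex.norm_real, Real.norm_eq_abs]
  gcongr
  simpa using hD (ℓ * (y - t))

variable {G : SchwartzMap ℝ ℂ} {D lam ℓ x d ρ t y y' : ℝ}

theorem norm_comp_mul_sub_sub_le (hD₀ : 0 ≤ D) (hD : ∀ x, ‖deriv G x‖ * (1 + |x|) ^ 3 ≤ D)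
    (hlam : 0 < lam) (hℓ : lam ≤ ℓ) (hℓ' : ℓ ≤ 2 * lam) (hρ : 0 < ρ)
    (hρt : ∀ ξ ∈ Metric.ball x d, ρ ≤ 1 + lam * |ξ - t|)
    (hy : y ∈ Metric.ball x d) (hy' : y' ∈ Metric.ball x d) :
    ‖G (ℓ * (y - t)) - G (ℓ * (y' - t))‖ ≤ 4 * lam * d * D / ρ ^ 3 := by
  have hℓ₀ : 0 < ℓ := hlam.trans_le hℓ
  have hderiv (ξ : ℝ) : HasDerivAt (fun ξ => G (ℓ * (ξ - t))) (ℓ • deriv G (ℓ * (ξ - t))) ξ := by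
    simpa [Function.comp_def] using
      (G.hasDerivAt (ℓ * (ξ - t))).scomp ξ (((hasDerivAt_id ξ).sub_const t).const_mul ℓ)
  have hbound : ∀ ξ ∈ Metric.ball x d, ‖ℓ • deriv G (ℓ * (ξ - t))‖ ≤ 2 * lam * (D / ρ ^ 3) := by
    intro ξ hξ
    have hρξ : ρ ≤ 1 + |ℓ * (ξ - t)| := by
      rw [abs_mul, abs_of_pos hℓ₀]
      exact (hρt ξ hξ).trans (by gcongr)
    rw [norm_smul, Real.norm_of_nonneg hℓ₀.le]
    gcongr
    rw [le_div_iff₀ (by positivity)]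
    exact le_trans (by gcongr) (hD _)
  have hdist : ‖y - y'‖ ≤ 2 * d := by
    rw [← dist_eq_norm]
    linarith [dist_triangle_right y y' x, Metric.mem_ball.1 hy, Metric.mem_ball.1 hy']
  calc _ ≤ 2 * lam * (D / ρ ^ 3) * ‖y - y'‖ :=
        (convex_ball x d).norm_image_sub_le_of_norm_hasDerivWithin_le
          (fun ξ _ => (hderiv ξ).hasDerivWithinAt) hbound hy' hy
    _ ≤ 2 * lam * (D / ρ ^ 3) * (2 * d) := by gcongr
    _ = _ := by ring

theorem norm_rotKernel_sub_le (hD₀ : 0 ≤ D) (hD : ∀ x, ‖deriv G x‖ * (1 + |x|) ^ 3 ≤ D)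
    (hlam : 0 < lam) (hℓ : lam ≤ ℓ) (hℓ' : ℓ ≤ 2 * lam) (hρ : 0 < ρ)
    (hρt : ∀ ξ ∈ Metric.ball x d, ρ ≤ 1 + lam * |ξ - t|)
    (hy : y ∈ Metric.ball x d) (hy' : y' ∈ Metric.ball x d) (θ : ℝ) :
    ‖rotKernel G ℓ θ y t - rotKernel G ℓ θ y' t‖ ≤ 8 * lam ^ 2 * d * D / ρ ^ 3 := by
  have hfactor : rotKernel G ℓ θ y t - rotKernel G ℓ θ y' t
      = ℓ * (G (ℓ * (y - t)) - G (ℓ * (y' - t))) * e2pi (-θ * t) := by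
    unfold rotKernel
    ring
  rw [hfactor, norm_mul, norm_e2pi, mul_one, norm_mul, Complex.norm_real,
    Real.norm_of_nonneg (hlam.le.trans hℓ)]
  calc _ ≤ 2 * lam * (4 * lam * d * D / ρ ^ 3) := by
        gcongr
        exact norm_comp_mul_sub_sub_le hD₀ hD hlam hℓ hℓ' hρ hρt hy hy'
    _ = _ := by ring

theorem norm_deriv_rotKernel_sub_le (hD₀ : 0 ≤ D) (hD : ∀ x, ‖deriv G x‖ * (1 + |x|) ^ 3 ≤ D)
    (hD' : ∀ x, ‖deriv (SchwartzMap.derivCLM ℝ ℂ G) x‖ * (1 + |x|) ^ 3 ≤ D)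
    (hlam : 0 < lam) (hℓ : lam ≤ ℓ) (hℓ' : ℓ ≤ 2 * lam) (hρ : 0 < ρ)
    (hρt : ∀ ξ ∈ Metric.ball x d, ρ ≤ 1 + lam * |ξ - t|)
    (hy : y ∈ Metric.ball x d) (hy' : y' ∈ Metric.ball x d) {θ : ℝ} (hθ : |θ| ≤ lam) :
    ‖deriv (fun t => rotKernel G ℓ θ y t - rotKernel G ℓ θ y' t) t‖
      ≤ 80 * lam ^ 3 * d * D / ρ ^ 3 := by
  have hderiv : deriv (fun t => rotKernel G ℓ θ y t - rotKernel G ℓ θ y' t) t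
      = -ℓ * (rotKernel (SchwartzMap.derivCLM ℝ ℂ G) ℓ θ y t
          - rotKernel (SchwartzMap.derivCLM ℝ ℂ G) ℓ θ y' t)
        + 2 * π * Complex.I * (-θ : ℝ) * (rotKernel G ℓ θ y t - rotKernel G ℓ θ y' t) := by
    rw [((hasDerivAt_rotKernel G ℓ θ y t).fun_sub (hasDerivAt_rotKernel G ℓ θ y' t)).deriv]
    ring
  have hfreq : ‖2 * (π : ℂ) * Complex.I * (-θ : ℝ)‖ ≤ 8 * lam := by
    rw [norm_mul, norm_mul, norm_mul, Complex.norm_I, Complex.norm_ofNat, Complex.norm_real,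
      Complex.norm_real, norm_neg, Real.norm_of_nonneg pi_pos.le, Real.norm_eq_abs]
    nlinarith [pi_le_four, pi_pos, abs_nonneg θ]
  rw [hderiv]
  refine (norm_add_le _ _).trans ?_
  rw [norm_mul, norm_mul, norm_neg, Complex.norm_real, Real.norm_of_nonneg (hlam.le.trans hℓ)]
  calc _ ≤ 2 * lam * (8 * lam ^ 2 * d * D / ρ ^ 3) + 8 * lam * (8 * lam ^ 2 * d * D / ρ ^ 3) := by
        gcongr
        · exact norm_rotKernel_sub_le hD₀ hD' hlam hℓ hℓ' hρ hρt hy hy' θ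
        · exact norm_rotKernel_sub_le hD₀ hD hlam hℓ hℓ' hρ hρt hy hy' θ
    _ = _ := by ring

end Kernel

section Oscillation

theorem exists_norm_deriv_mul_one_add_abs_pow_three_le (φ : SchwartzMap ℝ ℂ) :
    ∃ D, 0 < D ∧ (∀ x, ‖deriv φ x‖ * (1 + |x|) ^ 3 ≤ D) ∧
      ∀ x, ‖deriv (SchwartzMap.derivCLM ℝ ℂ φ) x‖ * (1 + |x|) ^ 3 ≤ D := by
  let φ' := SchwartzMap.derivCLM ℝ ℂ φ
  obtain ⟨D, hD₀, hD⟩ := exists_norm_mul_one_add_abs_pow_le φ' 3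
  obtain ⟨D', -, hD'⟩ := exists_norm_mul_one_add_abs_pow_le (SchwartzMap.derivCLM ℝ ℂ φ') 3
  exact ⟨max D D', lt_max_of_lt_left hD₀, fun x => (hD x).trans (le_max_left _ _),
    fun x => (hD' x).trans (le_max_right _ _)⟩

variable {ι : Type*} [Fintype ι] {a b : ι → ℝ} {φ : SchwartzMap ℝ ℂ} {f : ℝ → ℂ}
  {D lam x d ρ l t y y' : ℝ}

theorem sum_enorm_sq_integral_rotKernel_sub_mul_le (hab : IsNonoverlapping a b) (hlam : 0 < lam)
    (hlen : ∀ m, b m - a m ∈ Icc lam (2 * lam)) (hf : MemLp f 2) (hD₀ : 0 ≤ D)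
    (hD : ∀ x, ‖deriv φ x‖ * (1 + |x|) ^ 3 ≤ D)
    (hD' : ∀ x, ‖deriv (SchwartzMap.derivCLM ℝ ℂ φ) x‖ * (1 + |x|) ^ 3 ≤ D) (hρ : 0 < ρ)
    (hρl : ∀ t ∈ Icc l (l + lam⁻¹), ∀ ξ ∈ Metric.ball x d, ρ ≤ 1 + lam * |ξ - t|)
    (hy : y ∈ Metric.ball x d) (hy' : y' ∈ Metric.ball x d) :
    ∑ m, ‖∫ t in Ioc l (l + lam⁻¹),
        (rotKernel φ (b m - a m) (a m) y t - rotKernel φ (b m - a m) (a m) y' t) * f t‖ₑ ^ 2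
      ≤ ENNReal.ofReal (25600 * D ^ 2 * (lam ^ 3 * d ^ 2) / ρ ^ 6)
        * ∫⁻ t in Ioc l (l + lam⁻¹), ‖f t‖ₑ ^ 2 := by
  let n m := ⌊a m / lam⌋
  let θ m := a m - n m * lam
  let A m t := rotKernel φ (b m - a m) (θ m) y t - rotKernel φ (b m - a m) (θ m) y' t
  have hT : 0 < lam⁻¹ := inv_pos.2 hlam
  have hd : 0 < d := Metric.pos_of_mem_ball hy
  have hθ (m) : |θ m| ≤ lam := by
    rw [abs_of_nonneg (Int.sub_floor_div_mul_nonneg (a m) hlam)]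
    exact (Int.sub_floor_div_mul_lt (a m) hlam).le
  have hA (m) : ContDiff ℝ 1 (A m) := (contDiff_rotKernel ..).sub (contDiff_rotKernel ..)
  set κ := 80 * lam ^ 2 * d * D / ρ ^ 3 with hκ
  have hl : l ∈ Icc l (l + lam⁻¹) := left_mem_Icc.2 (by linarith)
  have hAκ (m) : ‖A m l‖ₑ ≤ ENNReal.ofReal κ := by
    rw [← ofReal_norm]
    refine ENNReal.ofReal_le_ofReal ((norm_rotKernel_sub_le hD₀ hD hlam (hlen m).1 (hlen m).2 hρ
      (hρl l hl) hy hy' (θ m)).trans ?_)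
    rw [hκ]
    gcongr
    norm_num
  have hA'κ (m) (t) (ht : t ∈ Ioc l (l + lam⁻¹)) :
      ‖deriv (A m) t‖ₑ ≤ ENNReal.ofReal κ / ENNReal.ofReal lam⁻¹ := by
    rw [← ENNReal.ofReal_div_of_pos hT, ← ofReal_norm]
    refine ENNReal.ofReal_le_ofReal ((norm_deriv_rotKernel_sub_le hD₀ hD hD' hlam (hlen m).1
      (hlen m).2 hρ (hρl t (Ioc_subset_Icc_self ht)) hy hy' (hθ m)).trans_eq ?_)
    rw [hκ]
    field_simp
  have hdemod (m) (t : ℝ) :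
      (rotKernel φ (b m - a m) (a m) y t - rotKernel φ (b m - a m) (a m) y' t) * f t
        = A m t * (e2pi (-(n m * t / lam⁻¹)) * f t) := by
    rw [rotKernel_sub_mul_eq_demodulate _ _ _ (n m * lam), div_inv_eq_mul, mul_right_comm]
  simp only [hdemod, ← intervalIntegral.integral_of_le (le_add_of_nonneg_right hT.le : l ≤ _)]
  refine (sum_enorm_sq_integral_mul_e2pi_mul_le hT
    (hab.injective_floor_div hlam fun m => (hlen m).1) (hf.restrict _)
    (fun m t => ((hA m).differentiable one_ne_zero t).hasDerivAt)
    (fun m => (hA m).continuous_deriv le_rfl) hAκ hA'κ).trans_eq ?_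
  congr 1
  rw [← ENNReal.ofReal_pow (by positivity), ← ENNReal.ofReal_ofNat 4,
    ← ENNReal.ofReal_mul (by positivity), ← ENNReal.ofReal_mul (by positivity), hκ]
  congr 1
  field_simp
  ring

theorem abs_mul_sub_sub_intCast_le_one {i : ℤ} (hlam : 0 < lam)
    (ht : t ∈ Icc (x + i * lam⁻¹) (x + i * lam⁻¹ + lam⁻¹)) : |lam * (t - x) - i| ≤ 1 := by
  have hfactor : lam * (t - x) - i = lam * (t - (x + i * lam⁻¹)) := by
    field_simp
    ring
  rw [hfactor, abs_of_nonneg (mul_nonneg hlam.le (sub_nonneg.2 ht.1)), ← le_div_iff₀' hlam, one_div]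
  linarith [ht.2]

theorem one_add_abs_div_four_le {i : ℤ} {t' ξ : ℝ} (hlam : 0 < lam)
    (ht : t ∈ Icc (x + i * lam⁻¹) (x + i * lam⁻¹ + lam⁻¹))
    (ht' : t' ∈ Icc (x + i * lam⁻¹) (x + i * lam⁻¹ + lam⁻¹))
    (hfar : t' ∉ Metric.ball x (2 * d)) (hξ : ξ ∈ Metric.ball x d) :
    (1 + |(i : ℝ)|) / 4 ≤ 1 + lam * |ξ - t| := by
  have hgrid := abs_mul_sub_sub_intCast_le_one hlam ht
  have hgrid' := abs_mul_sub_sub_intCast_le_one hlam ht'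
  rw [Metric.mem_ball, Real.dist_eq] at hfar hξ
  have hfar' : 2 * (lam * d) ≤ |lam * (t' - x)| := by
    rw [abs_mul, abs_of_pos hlam]
    nlinarith
  have hξ' : |lam * (ξ - x)| ≤ lam * d := by
    rw [abs_mul, abs_of_pos hlam]
    gcongr
  have hcenter : lam * |ξ - t| = |lam * (ξ - x) - lam * (t - x)| := by
    rw [← mul_sub, abs_mul, abs_of_pos hlam, sub_sub_sub_cancel_right]
  rw [hcenter]
  generalize lam * (ξ - x) = p at *
  generalize lam * (t - x) = r at *
  generalize lam * (t' - x) = r' at *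
  have hi : |(i : ℝ)| ≤ |r| + 1 := by
    linarith [abs_sub_abs_le_abs_sub (i : ℝ) r, abs_sub_comm r (i : ℝ)]
  have hr' : |r'| ≤ |(i : ℝ)| + 1 := by linarith [abs_sub_abs_le_abs_sub r' i]
  have hpr : |r| - |p| ≤ |p - r| := abs_sub_comm p r ▸ abs_sub_abs_le_abs_sub r p
  linarith [abs_nonneg (p - r), abs_nonneg (i : ℝ)]

theorem sum_enorm_sq_setIntegral_grid_le (hab : IsNonoverlapping a b) (hlam : 0 < lam)
    (hlen : ∀ m, b m - a m ∈ Icc lam (2 * lam)) (hf : MemLp f 2)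
    (hf₀ : EqOn f 0 (Metric.ball x (2 * d))) (hD₀ : 0 ≤ D)
    (hD : ∀ x, ‖deriv φ x‖ * (1 + |x|) ^ 3 ≤ D)
    (hD' : ∀ x, ‖deriv (SchwartzMap.derivCLM ℝ ℂ φ) x‖ * (1 + |x|) ^ 3 ≤ D)
    (hy : y ∈ Metric.ball x d) (hy' : y' ∈ Metric.ball x d) (i : ℤ) :
    ∑ m, ‖∫ t in Ioc (x + i * lam⁻¹) (x + i * lam⁻¹ + lam⁻¹),
        (rotKernel φ (b m - a m) (a m) y t - rotKernel φ (b m - a m) (a m) y' t) * f t‖ₑ ^ 2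
      ≤ ENNReal.ofReal (25600 * D ^ 2 * (lam ^ 3 * d ^ 2) / ((1 + |(i : ℝ)|) / 4) ^ 6)
        * ∫⁻ t in Ioc (x + i * lam⁻¹) (x + i * lam⁻¹ + lam⁻¹), ‖f t‖ₑ ^ 2 := by
  by_cases hmeet : ∃ t' ∈ Ioc (x + i * lam⁻¹) (x + i * lam⁻¹ + lam⁻¹), t' ∉ Metric.ball x (2 * d)
  · obtain ⟨t', ht', hfar⟩ := hmeet
    exact sum_enorm_sq_integral_rotKernel_sub_mul_le hab hlam hlen hf hD₀ hD hD' (by positivity)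
      (fun t ht ξ hξ => one_add_abs_div_four_le hlam ht (Ioc_subset_Icc_self ht') hfar hξ) hy hy'
  · push Not at hmeet
    refine (Finset.sum_eq_zero fun m _ => ?_).trans_le zero_le
    rw [setIntegral_eq_zero_of_forall_eq_zero fun t ht => by rw [hf₀ (hmeet t ht)]; simp]
    simp

theorem tsum_inv_one_add_abs_sq_ne_top :
    ∑' i : ℤ, ENNReal.ofReal (1 + |(i : ℝ)|)⁻¹ ^ 2 ≠ ∞ := by
  have hnat : Summable fun n : ℕ => (1 + (n : ℝ))⁻¹ ^ 2 := by
    simpa [add_comm] using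
      (summable_nat_add_iff (f := fun n : ℕ => ((n : ℝ) ^ 2)⁻¹) 1).2
        (Real.summable_nat_pow_inv.2 one_lt_two)
  have hint : Summable fun i : ℤ => (1 + |(i : ℝ)|)⁻¹ ^ 2 :=
    .of_nat_of_neg (by simpa using hnat) (by simpa using hnat)
  simp only [← ENNReal.ofReal_pow (inv_nonneg.2 (by positivity : 0 ≤ 1 + |((_ : ℤ) : ℝ)|))]
  exact hint.tsum_ofReal_ne_top

theorem iUnion_Ioc_add_intCast_mul (x : ℝ) {T : ℝ} (hT : 0 < T) :
    ⋃ i : ℤ, Ioc (x + i * T) (x + i * T + T) = univ := by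
  simpa [add_mul, ← add_assoc] using iUnion_Ioc_add_zsmul hT x

theorem pairwise_disjoint_Ioc_add_intCast_mul (x T : ℝ) :
    Pairwise (Disjoint on fun i : ℤ => Ioc (x + i * T) (x + i * T + T)) := by
  simpa [add_mul, ← add_assoc] using pairwise_disjoint_Ioc_add_zsmul x T

theorem sum_enorm_sq_integral_le_tsum {F : ι → ℝ → ℂ} (hF : ∀ m, Integrable (F m))
    (x : ℝ) {T : ℝ} (hT : 0 < T) :
    ∑ m, ‖∫ t, F m t‖ₑ ^ 2 ≤ (∑' i : ℤ, ENNReal.ofReal (1 + |(i : ℝ)|)⁻¹ ^ 2) *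
      ∑' i : ℤ, ENNReal.ofReal (1 + |(i : ℝ)|) ^ 2 *
        ∑ m, ‖∫ t in Ioc (x + i * T) (x + i * T + T), F m t‖ₑ ^ 2 := by
  have hweight (i : ℤ) :
      ENNReal.ofReal (1 + |(i : ℝ)|)⁻¹ * ENNReal.ofReal (1 + |(i : ℝ)|) = 1 := by
    rw [← ENNReal.ofReal_mul (by positivity), inv_mul_cancel₀ (by positivity), ENNReal.ofReal_one]
  simp only [Finset.mul_sum]
  rw [Summable.tsum_finsetSum fun _ _ => ENNReal.summable, Finset.mul_sum]
  refine Finset.sum_le_sum fun m _ => ?_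
  simp only [← mul_pow]
  calc ‖∫ t, F m t‖ₑ ^ 2
      = ‖∑' i : ℤ, ∫ t in Ioc (x + i * T) (x + i * T + T), F m t‖ₑ ^ 2 := by
        rw [← setIntegral_univ, ← iUnion_Ioc_add_intCast_mul x hT,
          integral_iUnion (fun _ => measurableSet_Ioc)
            (pairwise_disjoint_Ioc_add_intCast_mul x T) (hF m).integrableOn]
    _ ≤ (∑' i : ℤ, ‖∫ t in Ioc (x + i * T) (x + i * T + T), F m t‖ₑ) ^ 2 := by
        gcongr
        exact enorm_tsum_le_tsum_enorm
    _ ≤ _ := by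
        simpa only [← mul_assoc, hweight, one_mul] using
          sq_tsum_mul_le (fun i : ℤ => ENNReal.ofReal (1 + |(i : ℝ)|)⁻¹) fun i =>
            ENNReal.ofReal (1 + |(i : ℝ)|) * ‖∫ t in Ioc (x + i * T) (x + i * T + T), F m t‖ₑ

theorem one_add_mul_abs_sub_le {i : ℤ} (hlam : 0 < lam)
    (ht : t ∈ Ioc (x + i * lam⁻¹) (x + i * lam⁻¹ + lam⁻¹)) :
    1 + lam * |t - x| ≤ 2 * (1 + |(i : ℝ)|) := by
  have hgrid := abs_mul_sub_sub_intCast_le_one hlam (Ioc_subset_Icc_self ht)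
  have habs : lam * |t - x| = |lam * (t - x)| := by rw [abs_mul, abs_of_pos hlam]
  linarith [abs_sub_abs_le_abs_sub (lam * (t - x)) i, abs_nonneg (i : ℝ)]

theorem sq_mul_sum_enorm_sq_setIntegral_grid_le (hab : IsNonoverlapping a b) (hlam : 0 < lam)
    (hlen : ∀ m, b m - a m ∈ Icc lam (2 * lam)) (hf : MemLp f 2)
    (hf₀ : EqOn f 0 (Metric.ball x (2 * d))) (hD₀ : 0 ≤ D)
    (hD : ∀ x, ‖deriv φ x‖ * (1 + |x|) ^ 3 ≤ D)
    (hD' : ∀ x, ‖deriv (SchwartzMap.derivCLM ℝ ℂ φ) x‖ * (1 + |x|) ^ 3 ≤ D)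
    (hy : y ∈ Metric.ball x d) (hy' : y' ∈ Metric.ball x d) (i : ℤ) :
    ENNReal.ofReal (1 + |(i : ℝ)|) ^ 2 *
      ∑ m, ‖∫ t in Ioc (x + i * lam⁻¹) (x + i * lam⁻¹ + lam⁻¹),
        (rotKernel φ (b m - a m) (a m) y t - rotKernel φ (b m - a m) (a m) y' t) * f t‖ₑ ^ 2
      ≤ ∫⁻ t in Ioc (x + i * lam⁻¹) (x + i * lam⁻¹ + lam⁻¹),
          ENNReal.ofReal (16 * 4 ^ 6 * 25600 * D ^ 2) *
            (ENNReal.ofReal (lam ^ 3 * d ^ 2 / (1 + lam * |t - x|) ^ 4) * ‖f t‖ₑ ^ 2) := by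
  grw [sum_enorm_sq_setIntegral_grid_le hab hlam hlen hf hf₀ hD₀ hD hD' hy hy' i]
  rw [← mul_assoc, ← ENNReal.ofReal_pow (by positivity), ← ENNReal.ofReal_mul (by positivity),
    ← lintegral_const_mul' _ _ ENNReal.ofReal_ne_top]
  refine setLIntegral_mono' measurableSet_Ioc fun t ht => ?_
  rw [← mul_assoc (ENNReal.ofReal (_ * D ^ 2)), ← ENNReal.ofReal_mul (by positivity)]
  gcongr ENNReal.ofReal ?_ * _
  calc (1 + |(i : ℝ)|) ^ 2 * (25600 * D ^ 2 * (lam ^ 3 * d ^ 2) / ((1 + |(i : ℝ)|) / 4) ^ 6)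
      = 16 * 4 ^ 6 * 25600 * D ^ 2 * (lam ^ 3 * d ^ 2 / (2 * (1 + |(i : ℝ)|)) ^ 4) := by
        field_simp
        ring
    _ ≤ 16 * 4 ^ 6 * 25600 * D ^ 2 * (lam ^ 3 * d ^ 2 / (1 + lam * |t - x|) ^ 4) := by
        have hd : 0 < d := Metric.pos_of_mem_ball hy
        gcongr
        exact one_add_mul_abs_sub_le hlam ht

theorem integrable_rotKernel_sub_mul (φ : SchwartzMap ℝ ℂ) (hf : Integrable f) (l θ y y' : ℝ) :
    Integrable fun t => (rotKernel φ l θ y t - rotKernel φ l θ y' t) * f t := by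
  simpa only [sub_mul] using!
    (integrable_rotKernel_mul φ hf l θ y).sub (integrable_rotKernel_mul φ hf l θ y')

theorem rotConv_sub_eq_integral (φ : SchwartzMap ℝ ℂ) (hf : Integrable f) (a b y y' : ℝ) :
    rotConv φ a b f y - rotConv φ a b f y'
      = ∫ t, (rotKernel φ (b - a) a y t - rotKernel φ (b - a) a y' t) * f t := by
  simp only [rotConv_eq_integral_rotKernel, sub_mul]
  exact (integral_sub (integrable_rotKernel_mul φ hf ..) (integrable_rotKernel_mul φ hf ..)).symm

theorem exists_sum_enorm_sq_rotConv_sub_le_of_length (φ : SchwartzMap ℝ ℂ) :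
    ∃ C : ℝ≥0, ∀ {ι : Type*} [Fintype ι] {a b : ι → ℝ} {lam : ℝ}, IsNonoverlapping a b →
      0 < lam → (∀ m, b m - a m ∈ Icc lam (2 * lam)) → ∀ {f : ℝ → ℂ}, Integrable f → MemLp f 2 →
      ∀ {x d : ℝ}, EqOn f 0 (Metric.ball x (2 * d)) → ∀ {y y' : ℝ}, y ∈ Metric.ball x d →
      y' ∈ Metric.ball x d →
      ∑ m, ‖rotConv φ (a m) (b m) f y - rotConv φ (a m) (b m) f y'‖ₑ ^ 2
        ≤ C * ∫⁻ t, ENNReal.ofReal (lam ^ 3 * d ^ 2 / (1 + lam * |t - x|) ^ 4) * ‖f t‖ₑ ^ 2 := by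
  obtain ⟨D, hD₀, hD, hD'⟩ := exists_norm_deriv_mul_one_add_abs_pow_three_le φ
  set S := ∑' i : ℤ, ENNReal.ofReal (1 + |(i : ℝ)|)⁻¹ ^ 2 with hS
  refine ⟨S.toNNReal * (16 * 4 ^ 6 * 25600 * D ^ 2).toNNReal,
    fun {ι} _ a b lam hab hlam hlen f hf hf₂ x d hf₀ y y' hy hy' => ?_⟩
  simp only [rotConv_sub_eq_integral φ hf]
  grw [sum_enorm_sq_integral_le_tsum (fun m => integrable_rotKernel_sub_mul φ hf ..) x
    (inv_pos.2 hlam), ENNReal.tsum_le_tsum (sq_mul_sum_enorm_sq_setIntegral_grid_le hab hlam hlen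
      hf₂ hf₀ hD₀.le hD hD' hy hy')]
  rw [← lintegral_iUnion (fun _ => measurableSet_Ioc)
    (pairwise_disjoint_Ioc_add_intCast_mul x lam⁻¹), iUnion_Ioc_add_intCast_mul x
    (inv_pos.2 hlam), setLIntegral_univ, lintegral_const_mul' _ _ ENNReal.ofReal_ne_top,
    ENNReal.coe_mul, ENNReal.coe_toNNReal (hS ▸ tsum_inv_one_add_abs_sq_ne_top)]
  exact (mul_assoc ..).ge

end Oscillation

section DyadicLengths

theorem exists_tsum_lintegral_zpow_mul_le : ∃ C : ℝ≥0, ∀ {x d : ℝ} {h : ℝ → ℝ≥0∞}, 0 < d →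
    EqOn h 0 (Metric.ball x (2 * d)) → AEMeasurable h →
    ∑' k : ℤ, ∫⁻ t, ENNReal.ofReal (((2 : ℝ) ^ k) ^ 3 * d ^ 2 / (1 + 2 ^ k * |t - x|) ^ 4) * h t
      ≤ C * ∫⁻ t, h t ∂tailMeasure x (2 * d) := by
  obtain ⟨C, hC⟩ := exists_tsum_zpow_pow_three_div_le
  refine ⟨C, fun {x d h} hd hh₀ hh => ?_⟩
  rw [← lintegral_tsum fun k => (by fun_prop : AEMeasurable _ _), lintegral_tailMeasure,
    ← lintegral_const_mul' _ _ ENNReal.coe_ne_top,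
    ← lintegral_indicator Metric.isOpen_ball.measurableSet.compl]
  refine lintegral_mono fun t => ?_
  by_cases ht : t ∈ Metric.ball x (2 * d)
  · simp [hh₀ ht]
  have hfar : 2 * d ≤ |t - x| := by simpa [Real.dist_eq] using ht
  rw [indicator_of_mem (by exact ht), ENNReal.tsum_mul_right, ← mul_assoc]
  gcongr
  calc ∑' k : ℤ, ENNReal.ofReal (((2 : ℝ) ^ k) ^ 3 * d ^ 2 / (1 + 2 ^ k * |t - x|) ^ 4)
      = (∑' k : ℤ, ENNReal.ofReal (((2 : ℝ) ^ k) ^ 3 / (1 + 2 ^ k * |t - x|) ^ 4))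
          * ENNReal.ofReal (d ^ 2) := by
        simp only [← ENNReal.tsum_mul_right, mul_div_right_comm,
          ENNReal.ofReal_mul' (sq_nonneg d)]
    _ ≤ C * ENNReal.ofReal (1 / |t - x| ^ 3) * ENNReal.ofReal ((2 * d) ^ 2) := by
        gcongr
        · exact hC _ (by linarith)
        · linarith
    _ = C * ENNReal.ofReal ((2 * d) ^ 2 / |t - x| ^ 3) := by
        rw [mul_assoc, ← ENNReal.ofReal_mul' (sq_nonneg _), one_div_mul_eq_div]

theorem exists_sum_enorm_sq_rotConv_sub_le (φ : SchwartzMap ℝ ℂ) :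
    ∃ C : ℝ≥0, ∀ {ι : Type*} [Fintype ι] {a b : ι → ℝ}, IsNonoverlapping a b →
      ∀ {f : ℝ → ℂ}, Integrable f → MemLp f 2 →
      ∀ {x d : ℝ}, EqOn f 0 (Metric.ball x (2 * d)) → ∀ {y y' : ℝ}, y ∈ Metric.ball x d →
      y' ∈ Metric.ball x d →
      ∑ m, ‖rotConv φ (a m) (b m) f y - rotConv φ (a m) (b m) f y'‖ₑ ^ 2
        ≤ C * ∫⁻ t, ‖f t‖ₑ ^ 2 ∂tailMeasure x (2 * d) := by
  classical
  obtain ⟨C, hC⟩ := exists_sum_enorm_sq_rotConv_sub_le_of_length φ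
  obtain ⟨C', hC'⟩ := exists_tsum_lintegral_zpow_mul_le
  refine ⟨C * C', fun {ι} _ a b hab f hf hf₂ x d hf₀ y y' hy hy' => ?_⟩
  let k m := Int.log 2 (b m - a m)
  have hlen (j : ℤ) (m : k ⁻¹' {j}) : b m - a m ∈ Icc ((2 : ℝ) ^ j) (2 * 2 ^ j) := by
    have hlow := Int.zpow_log_le_self one_lt_two (sub_pos.2 (hab.lt m))
    have hupp := Int.lt_zpow_succ_log_self one_lt_two (b m - a m)
    have hkj : Int.log 2 (b m - a m) = j := m.2
    rw [hkj] at hlow hupp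
    rw [zpow_add_one₀ (by norm_num), mul_comm] at hupp
    exact ⟨by exact_mod_cast hlow, by exact_mod_cast hupp.le⟩
  calc ∑ m, ‖rotConv φ (a m) (b m) f y - rotConv φ (a m) (b m) f y'‖ₑ ^ 2
      = ∑' j, ∑ m : k ⁻¹' {j},
          ‖rotConv φ (a m) (b m) f y - rotConv φ (a m) (b m) f y'‖ₑ ^ 2 := by
        simp only [← tsum_fintype (L := .unconditional _)]
        exact (ENNReal.tsum_fiberwise _ k).symm
    _ ≤ ∑' j : ℤ, C * ∫⁻ t,
          ENNReal.ofReal (((2 : ℝ) ^ j) ^ 3 * d ^ 2 / (1 + 2 ^ j * |t - x|) ^ 4) * ‖f t‖ₑ ^ 2 :=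
        ENNReal.tsum_le_tsum fun j =>
          hC (hab.comp_injective Subtype.val_injective) (by positivity) (hlen j) hf hf₂ hf₀ hy hy'
    _ ≤ (C * C' : ℝ≥0) * ∫⁻ t, ‖f t‖ₑ ^ 2 ∂tailMeasure x (2 * d) := by
        rw [ENNReal.tsum_mul_left, ENNReal.coe_mul, mul_assoc]
        gcongr
        exact hC' (Metric.pos_of_mem_ball hy) (fun t ht => by simp [hf₀ ht]) (by fun_prop)

theorem exists_sum_enorm_sq_rotConv_sub_rpow_le (φ : SchwartzMap ℝ ℂ) {r : ℝ} (hr : 1 ≤ r) :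
    ∃ C : ℝ≥0, ∀ {ι : Type*} [Fintype ι] {a b : ι → ℝ}, IsNonoverlapping a b →
      ∀ {f : ℝ → ℂ}, Integrable f → MemLp f 2 →
      ∀ {x d : ℝ}, EqOn f 0 (Metric.ball x (2 * d)) → ∀ {y y' : ℝ}, y ∈ Metric.ball x d →
      y' ∈ Metric.ball x d →
      (∑ m, ‖rotConv φ (a m) (b m) f y - rotConv φ (a m) (b m) f y'‖ₑ ^ 2) ^ r
        ≤ C * ∫⁻ t, (‖f t‖ₑ ^ 2) ^ r ∂tailMeasure x (2 * d) := by
  obtain ⟨C, hC⟩ := exists_sum_enorm_sq_rotConv_sub_le φ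
  obtain ⟨C', hC'⟩ := exists_tailMeasure_univ_le
  refine ⟨C ^ r * C' ^ (r - 1), fun {ι} _ a b hab f hf hf₂ x d hf₀ y y' hy hy' => ?_⟩
  have hd : 0 < d := Metric.pos_of_mem_ball hy
  have htail : tailMeasure x (2 * d) ≪ volume :=
    (withDensity_absolutelyContinuous _ _).trans Measure.restrict_le_self.absolutelyContinuous
  have hfm : AEMeasurable (fun t => ‖f t‖ₑ ^ 2) (tailMeasure x (2 * d)) :=
    (hf.1.mono_ac htail).enorm.pow_const 2
  grw [hC hab hf hf₂ hf₀ hy hy', ENNReal.mul_rpow_of_nonneg _ _ (by linarith),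
    lintegral_rpow_le_measure_univ_rpow_mul hfm hr]
  rw [ENNReal.coe_mul, mul_assoc, ENNReal.coe_rpow_of_nonneg _ (by linarith),
    ENNReal.coe_rpow_of_nonneg _ (by linarith)]
  gcongr
  exact hC' x _ (by positivity)

end DyadicLengths

section Plancherel

theorem fourierInv_apply_eq_integral_e2pi (G : SchwartzMap ℝ ℂ) (x : ℝ) :
    𝓕⁻ G x = ∫ ξ, e2pi (ξ * x) * G ξ := by
  rw [SchwartzMap.fourierInv_coe, Real.fourierInv_eq']
  refine integral_congr_ae (.of_forall fun ξ => ?_)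
  simp only [smul_eq_mul, e2pi, RCLike.inner_apply, conj_trivial]
  congr 2
  push_cast
  ring

theorem exists_schwartzMap_eq_phim (φ : SchwartzMap ℝ ℂ) {a b : ℝ} (hab : a < b) :
    ∃ G : SchwartzMap ℝ ℂ, ⇑G = phim φ a b ∧ ∀ ξ, 𝓕 G ξ = 𝓕 φ ((ξ - a) / (b - a)) := by
  have hℓ : 0 < b - a := sub_pos.2 hab
  let K : SchwartzMap ℝ ℂ := SchwartzMap.compSubConstCLM ℝ a
    (SchwartzMap.compCLMOfContinuousLinearEquiv ℝ
      (ContinuousLinearEquiv.unitsEquivAut ℝ (Units.mk0 _ (inv_ne_zero hℓ.ne'))) (𝓕 φ))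
  have hK (ξ : ℝ) : K ξ = 𝓕 φ ((ξ - a) / (b - a)) := by simp [K, div_eq_mul_inv]
  refine ⟨𝓕⁻ K, funext fun x => ?_, fun ξ => by rw [FourierTransform.fourier_fourierInv_eq, hK]⟩
  calc 𝓕⁻ K x = ∫ ξ, e2pi (ξ * x) * 𝓕 φ ((ξ - a) / (b - a)) := by
        simp only [fourierInv_apply_eq_integral_e2pi, hK]
    _ = ∫ ξ, e2pi ((ξ + a) * x) * 𝓕 φ (ξ / (b - a)) := by
        simpa only [sub_add_cancel] using
          integral_sub_right_eq_self (fun ξ => e2pi ((ξ + a) * x) * 𝓕 φ (ξ / (b - a))) a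
    _ = (b - a) * ∫ η, e2pi ((η * (b - a) + a) * x) * 𝓕 φ η := by
        rw [← Complex.ofReal_sub, ← Complex.real_smul]
        simpa [hℓ.ne', abs_of_pos hℓ] using Measure.integral_comp_div
          (fun η => e2pi ((η * (b - a) + a) * x) * 𝓕 φ η) (b - a)
    _ = (b - a) * e2pi (a * x) * ∫ η, e2pi (η * ((b - a) * x)) * 𝓕 φ η := by
        have hexp (η : ℝ) : (η * (b - a) + a) * x = a * x + η * ((b - a) * x) := by ring
        simp only [hexp, e2pi_add, mul_assoc, integral_const_mul]
    _ = phim φ a b x := by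
        rw [← fourierInv_apply_eq_integral_e2pi, FourierTransform.fourierInv_fourier_eq, phim]
        push_cast
        rfl

theorem coe_convolution_mul (f G : SchwartzMap ℝ ℂ) :
    ⇑(SchwartzMap.convolution (ContinuousLinearMap.mul ℂ ℂ) f G) = conv f G :=
  funext fun x => SchwartzMap.convolution_apply _ f G x

theorem lintegral_enorm_sq_eq_enorm_toLp_sq {α E : Type*} [MeasurableSpace α] {μ : Measure α}
    [NormedAddCommGroup E] {f : α → E} (hf : MemLp f 2 μ) :
    ∫⁻ x, ‖f x‖ₑ ^ 2 ∂μ = ‖hf.toLp f‖ₑ ^ 2 := by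
  rw [Lp.enorm_toLp]
  simpa using (eLpNorm_nnreal_pow_eq_lintegral (f := f) (μ := μ) (p := 2) two_ne_zero).symm

theorem lintegral_enorm_sq_fourier (f : SchwartzMap ℝ ℂ) :
    ∫⁻ ξ, ‖𝓕 f ξ‖ₑ ^ 2 = ∫⁻ x, ‖f x‖ₑ ^ 2 := by
  rw [lintegral_enorm_sq_eq_enorm_toLp_sq ((𝓕 f).memLp 2 volume),
    lintegral_enorm_sq_eq_enorm_toLp_sq (f.memLp 2 volume)]
  congr 1
  exact enorm_eq_iff_norm_eq.2 (SchwartzMap.norm_fourier_toL2_eq f)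

end Plancherel

section SquareSum

/-- The square of the Rubio de Francia square function of `f`. -/
noncomputable def squareSum {ι : Type*} [Fintype ι] (φ : ℝ → ℂ) (a b : ι → ℝ) (f : ℝ → ℂ)
    (x : ℝ) : ℝ≥0∞ :=
  ∑ m, ‖conv f (phim φ (a m) (b m)) x‖ₑ ^ 2

variable {ι : Type*} [Fintype ι] {a b : ι → ℝ} {f : ℝ → ℂ} {φ : SchwartzMap ℝ ℂ}

theorem IsNonoverlapping.sum_comp_sub_div_le (hab : IsNonoverlapping a b) {h : ℝ → ℝ≥0∞}
    {K : ℝ≥0∞} (hsupp : support h ⊆ Ioo 0 1) (hK : ∀ ξ, h ξ ≤ K) (ξ : ℝ) :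
    ∑ m, h ((ξ - a m) / (b m - a m)) ≤ K := by
  have mem_Ioo {m : ι} (hm : h ((ξ - a m) / (b m - a m)) ≠ 0) : ξ ∈ Ioo (a m) (b m) := by
    have hℓ : 0 < b m - a m := sub_pos.2 (hab.lt m)
    obtain ⟨hpos, hlt⟩ := hsupp hm
    rw [div_pos_iff_of_pos_right hℓ, sub_pos] at hpos
    rw [div_lt_one hℓ, sub_lt_sub_iff_right] at hlt
    exact ⟨hpos, hlt⟩
  by_cases hex : ∃ m, h ((ξ - a m) / (b m - a m)) ≠ 0
  · obtain ⟨m, hm⟩ := hex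
    rw [Finset.sum_eq_single_of_mem m (Finset.mem_univ m)]
    · exact hK _
    · intro m' _ hne
      by_contra hm'
      exact (disjoint_left.1 (hab.disjoint hne)) (mem_Ioo hm') (mem_Ioo hm)
  · push Not at hex
    simp [hex]

theorem exists_lintegral_squareSum_le_of_schwartzMap (hφ : support (𝓕 ⇑φ) ⊆ Ioo 0 1) :
    ∃ C : ℝ≥0, ∀ {ι : Type*} [Fintype ι] {a b : ι → ℝ}, IsNonoverlapping a b →
      ∀ f : SchwartzMap ℝ ℂ, ∫⁻ x, squareSum φ a b f x ≤ C * ∫⁻ x, ‖f x‖ₑ ^ 2 := by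
  obtain ⟨D, -, hD⟩ := exists_norm_mul_one_add_abs_pow_le (𝓕 φ) 0
  simp only [pow_zero, mul_one] at hD
  refine ⟨D.toNNReal ^ 2, fun {ι} _ a b hab f => ?_⟩
  choose G hG hGF using fun m => exists_schwartzMap_eq_phim φ (hab.lt m)
  let H m := SchwartzMap.convolution (ContinuousLinearMap.mul ℂ ℂ) f (G m)
  calc ∫⁻ x, squareSum φ a b f x = ∑ m, ∫⁻ x, ‖H m x‖ₑ ^ 2 := by
        rw [← lintegral_finsetSum _ fun m _ => (H m).continuous.enorm.measurable.pow_const 2]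
        simp only [squareSum, H, coe_convolution_mul, hG]
    _ = ∑ m, ∫⁻ ξ, ‖𝓕 f ξ‖ₑ ^ 2 * ‖𝓕 φ ((ξ - a m) / (b m - a m))‖ₑ ^ 2 := by
        refine Finset.sum_congr rfl fun m _ => ?_
        rw [← lintegral_enorm_sq_fourier, SchwartzMap.fourier_convolution]
        simp [hGF, mul_pow]
    _ = ∫⁻ ξ, ‖𝓕 f ξ‖ₑ ^ 2 * ∑ m, ‖𝓕 φ ((ξ - a m) / (b m - a m))‖ₑ ^ 2 := by
        simp only [Finset.mul_sum]
        refine (lintegral_finsetSum _ fun m _ => ?_).symm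
        have := (𝓕 f).continuous
        have := (𝓕 φ).continuous
        fun_prop
    _ ≤ ∫⁻ ξ, ‖𝓕 f ξ‖ₑ ^ 2 * (D.toNNReal ^ 2 : ℝ≥0) := by
        gcongr with ξ
        refine hab.sum_comp_sub_div_le (h := fun ξ => ‖𝓕 φ ξ‖ₑ ^ 2) ?_ (fun ξ => ?_) ξ
        · simpa [Function.support, SchwartzMap.fourier_coe] using hφ
        · rw [ENNReal.coe_pow, ← ofReal_norm]
          gcongr
          exact ENNReal.ofReal_le_ofReal (hD ξ)
    _ = (D.toNNReal ^ 2 : ℝ≥0) * ∫⁻ x, ‖f x‖ₑ ^ 2 := by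
        rw [lintegral_mul_const' _ _ ENNReal.coe_ne_top, lintegral_enorm_sq_fourier, mul_comm]

end SquareSum

section ConvBounds

variable {f g : ℝ → ℂ}

theorem integrable_mul_comp_sub (hf : Integrable f) (G : SchwartzMap ℝ ℂ) (x : ℝ) :
    Integrable fun t => f t * G (x - t) :=
  hf.mul_bdd (c := SchwartzMap.seminorm ℝ 0 0 G)
    (G.continuous.comp (by fun_prop)).aestronglyMeasurable
    (.of_forall fun t => G.norm_le_seminorm ℝ (x - t))

theorem conv_add_left (hf : Integrable f) (hg : Integrable g) (G : SchwartzMap ℝ ℂ) (x : ℝ) :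
    conv (f + g) G x = conv f G x + conv g G x := by
  simp only [conv, Pi.add_apply, add_mul]
  exact integral_add (integrable_mul_comp_sub hf G x) (integrable_mul_comp_sub hg G x)

theorem continuous_conv (hf : Integrable f) (G : SchwartzMap ℝ ℂ) : Continuous (conv f G) :=
  BddAbove.continuous_convolution_right_of_integrable (ContinuousLinearMap.mul ℂ ℂ)
    ⟨SchwartzMap.seminorm ℝ 0 0 G, forall_mem_range.2 (G.norm_le_seminorm ℝ)⟩ hf G.continuous

theorem enorm_conv_le_eLpNorm_mul_eLpNorm (hf : AEStronglyMeasurable f)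
    (hg : AEStronglyMeasurable g) (x : ℝ) :
    ‖conv f g x‖ₑ ≤ eLpNorm f 2 * eLpNorm g 2 := by
  have hmp := Measure.measurePreserving_sub_left volume x
  have hle : ‖conv f g x‖ₑ ≤ eLpNorm (f • g ∘ fun t => x - t) 1 := by
    rw [eLpNorm_one_eq_lintegral_enorm]
    exact enorm_integral_le_lintegral_enorm _
  rw [← eLpNorm_comp_measurePreserving hg hmp]
  exact hle.trans (eLpNorm_smul_le_mul_eLpNorm (hg.comp_measurePreserving hmp) hf)

theorem exists_seq_schwartzMap_tendsto_toLp {p : ℝ≥0∞} [Fact (1 ≤ p)] (hp : p ≠ ∞)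
    (F : Lp ℂ p (volume : Measure ℝ)) :
    ∃ g : ℕ → SchwartzMap ℝ ℂ,
      Filter.Tendsto (fun n => (g n).toLp p volume) Filter.atTop (nhds F) := by
  obtain ⟨u, hu, hlim⟩ := mem_closure_iff_seq_limit.1 (SchwartzMap.denseRange_toLpCLM hp F)
  choose g hg using hu
  exact ⟨g, hlim.congr fun n => (hg n).symm⟩

theorem tendsto_conv_of_tendsto_toLp (hf : Integrable f) (hf₂ : MemLp f 2)
    {g : ℕ → SchwartzMap ℝ ℂ}
    (hg : Filter.Tendsto (fun n => (g n).toLp 2 volume) Filter.atTop (nhds (hf₂.toLp f)))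
    (G : SchwartzMap ℝ ℂ) (x : ℝ) :
    Filter.Tendsto (fun n => conv (g n) G x) Filter.atTop (nhds (conv f G x)) := by
  have hsub (n : ℕ) : conv (g n) G x - conv f G x = conv (⇑(g n) - f) G x := by
    rw [sub_eq_iff_eq_add, ← conv_add_left ((g n).integrable.sub hf) hf, sub_add_cancel]
  rw [tendsto_iff_edist_tendsto_0] at hg ⊢
  simp only [SchwartzMap.toLp, Lp.edist_toLp_toLp] at hg
  have hbound := ENNReal.Tendsto.mul_const hg (.inr (G.memLp 2 volume).eLpNorm_ne_top)
  rw [zero_mul] at hbound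
  refine tendsto_of_tendsto_of_tendsto_of_le_of_le tendsto_const_nhds hbound (fun _ => zero_le)
    fun n => ?_
  rw [edist_eq_enorm_sub, hsub]
  exact enorm_conv_le_eLpNorm_mul_eLpNorm
    ((g n).continuous.aestronglyMeasurable.sub hf.aestronglyMeasurable)
    G.continuous.aestronglyMeasurable x

end ConvBounds

section SquareSumBound

variable {ι : Type*} [Fintype ι] {a b : ι → ℝ} {f : ℝ → ℂ} {φ : SchwartzMap ℝ ℂ}

theorem continuous_squareSum (hab : ∀ m, a m < b m) (hf : Integrable f) :
    Continuous (squareSum φ a b f) := by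
  refine continuous_finsetSum _ fun m _ => ?_
  obtain ⟨G, hG, -⟩ := exists_schwartzMap_eq_phim φ (hab m)
  rw [← hG]
  exact (ENNReal.continuous_pow 2).comp (continuous_conv hf G).enorm

theorem exists_forall_squareSum_le (hab : ∀ m, a m < b m) (hf : MemLp f 2) :
    ∃ B : ℝ≥0∞, B ≠ ∞ ∧ ∀ x, squareSum φ a b f x ≤ B := by
  choose G hG _ using fun m => exists_schwartzMap_eq_phim φ (hab m)
  refine ⟨∑ m, (eLpNorm f 2 * eLpNorm (G m) 2) ^ 2, ENNReal.sum_ne_top.2 fun m _ => ?_,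
    fun x => Finset.sum_le_sum fun m _ => ?_⟩
  · exact ENNReal.pow_ne_top
      (ENNReal.mul_ne_top hf.eLpNorm_ne_top ((G m).memLp 2 volume).eLpNorm_ne_top)
  · rw [← hG]
    gcongr
    exact enorm_conv_le_eLpNorm_mul_eLpNorm hf.1 (G m).continuous.aestronglyMeasurable x

theorem exists_lintegral_squareSum_le (hφ : support (𝓕 ⇑φ) ⊆ Ioo 0 1) :
    ∃ C : ℝ≥0, ∀ {ι : Type*} [Fintype ι] {a b : ι → ℝ}, IsNonoverlapping a b →
      ∀ {f : ℝ → ℂ}, Integrable f → MemLp f 2 →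
        ∫⁻ x, squareSum φ a b f x ≤ C * ∫⁻ x, ‖f x‖ₑ ^ 2 := by
  obtain ⟨C, hC⟩ := exists_lintegral_squareSum_le_of_schwartzMap hφ
  refine ⟨C, fun {ι} _ a b hab f hf hf₂ => ?_⟩
  obtain ⟨g, hg⟩ := exists_seq_schwartzMap_tendsto_toLp ENNReal.ofNat_ne_top (hf₂.toLp f)
  have hlim (x : ℝ) : Filter.Tendsto (fun n => squareSum φ a b (g n) x) Filter.atTop
      (nhds (squareSum φ a b f x)) := by
    refine tendsto_finsetSum _ fun m _ => ENNReal.Tendsto.pow (Filter.Tendsto.enorm ?_)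
    obtain ⟨G, hG, -⟩ := exists_schwartzMap_eq_phim φ (hab.lt m)
    rw [← hG]
    exact tendsto_conv_of_tendsto_toLp hf hf₂ hg G x
  have hnorm : Filter.Tendsto (fun n => C * ∫⁻ x, ‖g n x‖ₑ ^ 2) Filter.atTop
      (nhds (C * ∫⁻ x, ‖f x‖ₑ ^ 2)) := by
    rw [lintegral_enorm_sq_eq_enorm_toLp_sq hf₂]
    simp only [fun n => lintegral_enorm_sq_eq_enorm_toLp_sq ((g n).memLp 2 volume)]
    exact ENNReal.Tendsto.const_mul (ENNReal.Tendsto.pow hg.enorm) (.inr ENNReal.coe_ne_top)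
  calc ∫⁻ x, squareSum φ a b f x
      = ∫⁻ x, Filter.liminf (fun n => squareSum φ a b (g n) x) Filter.atTop :=
        lintegral_congr fun x => (hlim x).liminf_eq.symm
    _ ≤ Filter.liminf (fun n => ∫⁻ x, squareSum φ a b (g n) x) Filter.atTop :=
        lintegral_liminf_le fun n => (continuous_squareSum hab.lt (g n).integrable).measurable
    _ ≤ Filter.liminf (fun n => C * ∫⁻ x, ‖g n x‖ₑ ^ 2) Filter.atTop :=
        Filter.liminf_le_liminf (.of_forall fun n => hC hab (g n))
    _ = C * ∫⁻ x, ‖f x‖ₑ ^ 2 := hnorm.liminf_eq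

end SquareSumBound

section LocalControl

variable {ι : Type*} [Fintype ι] {a b : ι → ℝ} {f g k : ℝ → ℂ} {φ : SchwartzMap ℝ ℂ}

theorem squareSum_add_le (hab : ∀ m, a m < b m) (hg : Integrable g) (hk : Integrable k)
    (y y' : ℝ) :
    squareSum φ a b (g + k) y ≤ 4 * (squareSum φ a b g y + squareSum φ a b g y'
      + squareSum φ a b (g + k) y'
      + ∑ m, ‖rotConv φ (a m) (b m) k y - rotConv φ (a m) (b m) k y'‖ₑ ^ 2) := by
  simp only [squareSum, ← enorm_rotConv, ← Finset.sum_add_distrib, Finset.mul_sum]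
  refine Finset.sum_le_sum fun m _ => ?_
  let R : (ℝ → ℂ) → ℝ → ℂ := rotConv φ (a m) (b m)
  have hadd (x : ℝ) : R (g + k) x = R g x + R k x := by
    obtain ⟨G, hG, -⟩ := exists_schwartzMap_eq_phim φ (hab m)
    simp only [R, rotConv, ← hG, conv_add_left hg hk, mul_add]
  have hsplit : R (g + k) y = R g y - R g y' + R (g + k) y' + (R k y - R k y') := by
    rw [hadd, hadd]
    ring
  calc ‖R (g + k) y‖ₑ ^ 2
      ≤ (‖R g y‖ₑ + ‖R g y'‖ₑ + ‖R (g + k) y'‖ₑ + ‖R k y - R k y'‖ₑ) ^ 2 := by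
        rw [hsplit]
        grw [enorm_add_le, enorm_add_le, enorm_sub_le]
    _ ≤ 4 * (‖R g y‖ₑ ^ 2 + ‖R g y'‖ₑ ^ 2 + ‖R (g + k) y'‖ₑ ^ 2 + ‖R k y - R k y'‖ₑ ^ 2) := by
        have := ennreal_rpow_add_add_add_le ‖R g y‖ₑ ‖R g y'‖ₑ ‖R (g + k) y'‖ₑ
          ‖R k y - R k y'‖ₑ one_le_two
        norm_num at this
        exact this

theorem exists_squareSum_rpow_le (φ : SchwartzMap ℝ ℂ) {r : ℝ} (hr : 1 ≤ r) :
    ∃ A : ℝ≥0, ∀ {ι : Type*} [Fintype ι] {a b : ι → ℝ}, IsNonoverlapping a b →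
      ∀ {f : ℝ → ℂ}, Integrable f → MemLp f 2 → ∀ {x d y y' : ℝ},
        y ∈ Metric.ball x d → y' ∈ Metric.ball x d →
        squareSum φ a b f y ^ r ≤
          A * (squareSum φ a b ((Metric.ball x (2 * d)).indicator f) y ^ r
            + squareSum φ a b ((Metric.ball x (2 * d)).indicator f) y' ^ r
            + squareSum φ a b f y' ^ r + ∫⁻ t, (‖f t‖ₑ ^ 2) ^ r ∂tailMeasure x (2 * d)) := by
  obtain ⟨C, hC⟩ := exists_sum_enorm_sq_rotConv_sub_rpow_le φ hr
  have hr₀ : 0 ≤ r := zero_le_one.trans hr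
  refine ⟨4 ^ r * 4 ^ (r - 1) * (1 + C), fun {ι} _ a b hab f hf hf₂ x d y y' hy hy' => ?_⟩
  let B : Set ℝ := Metric.ball x (2 * d)
  let far := Bᶜ.indicator f
  let osc : ℝ≥0∞ := ∑ m, ‖rotConv φ (a m) (b m) far y - rotConv φ (a m) (b m) far y'‖ₑ ^ 2
  have hsplit : squareSum φ a b f y ≤ 4 * (squareSum φ a b (B.indicator f) y
      + squareSum φ a b (B.indicator f) y' + squareSum φ a b f y' + osc) := by
    have hle := squareSum_add_le (φ := φ) hab.lt (hf.indicator measurableSet_ball (s := B))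
      (hf.indicator measurableSet_ball.compl (s := Bᶜ)) y y'
    rwa [indicator_self_add_compl] at hle
  have hosc : osc ^ r ≤ C * ∫⁻ t, (‖f t‖ₑ ^ 2) ^ r ∂tailMeasure x (2 * d) := by
    refine (hC hab (hf.indicator measurableSet_ball.compl)
      (hf₂.indicator measurableSet_ball.compl)
      (fun t ht => indicator_of_notMem (notMem_compl_iff.2 ht) f) hy hy').trans ?_
    gcongr with t
    exact enorm_indicator_le_enorm_self _ _
  grw [hsplit, ENNReal.mul_rpow_of_nonneg _ _ hr₀, ennreal_rpow_add_add_add_le _ _ _ _ hr, hosc]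
  rw [ENNReal.coe_mul, ENNReal.coe_mul, ENNReal.coe_rpow_of_nonneg _ hr₀,
    ENNReal.coe_rpow_of_nonneg _ (sub_nonneg.2 hr), ENNReal.coe_ofNat, mul_assoc, mul_assoc,
    ENNReal.coe_add, ENNReal.coe_one, mul_add (1 + (C : ℝ≥0∞))]
  gcongr
  · exact le_mul_of_one_le_left' le_self_add
  · exact le_add_self

end LocalControl

section VectorValued

/-- `SquareSumBound φ r t C` is the vector-valued inequality
`∫ (∑ⱼ S(Fⱼ) ^ (2 * r)) ^ t ≤ C * ∫ (∑ⱼ |Fⱼ| ^ (2 * r)) ^ t` for finite families in `L¹ ∩ L²`,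
uniformly over all square functions `S = (squareSum φ a b ·) ^ (1 / 2)` of non-overlapping
intervals. Powers of `‖F j x‖ₑ ^ 2` are used so that both sides have the same shape. -/
def SquareSumBound.{u, v} (φ : SchwartzMap ℝ ℂ) (r t : ℝ) (C : ℝ≥0) : Prop :=
  ∀ {ι : Type u} [Fintype ι] {a b : ι → ℝ}, IsNonoverlapping a b →
    ∀ {κ : Type v} (J : Finset κ) {F : κ → ℝ → ℂ}, (∀ j, Integrable (F j)) →
      (∀ j, MemLp (F j) 2) →
        ∫⁻ x, (∑ j ∈ J, squareSum φ a b (F j) x ^ r) ^ t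
          ≤ C * ∫⁻ x, (∑ j ∈ J, (‖F j x‖ₑ ^ 2) ^ r) ^ t

universe u v

variable {φ : SchwartzMap ℝ ℂ} {r t : ℝ} {C : ℝ≥0}

theorem SquareSumBound.lintegral_rpow_mul_le (hC : SquareSumBound.{u, v} φ r t C) {ι : Type u}
    [Fintype ι] {a b : ι → ℝ} (hab : IsNonoverlapping a b) {f : ℝ → ℂ} (hf : Integrable f)
    (hf₂ : MemLp f 2) :
    ∫⁻ x, squareSum φ a b f x ^ (r * t) ≤ C * ∫⁻ x, (‖f x‖ₑ ^ 2) ^ (r * t) := by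
  simpa only [Finset.sum_singleton, ENNReal.rpow_mul] using
    hC hab {PUnit.unit} (F := fun _ => f) (fun _ => hf) (fun _ => hf₂)

theorem squareSumBound_one_of_forall_le
    (hC : ∀ {ι : Type u} [Fintype ι] {a b : ι → ℝ}, IsNonoverlapping a b → ∀ {f : ℝ → ℂ},
      Integrable f → MemLp f 2 →
        ∫⁻ x, squareSum φ a b f x ^ r ≤ C * ∫⁻ x, (‖f x‖ₑ ^ 2) ^ r) :
    SquareSumBound.{u, v} φ r 1 C := by
  intro ι _ a b hab κ J F hF hF₂
  simp only [ENNReal.rpow_one]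
  rw [lintegral_finsetSum _ fun j _ => (continuous_squareSum hab.lt (hF j)).measurable.pow_const r,
    lintegral_finsetSum' _ fun j _ => ((hF j).aemeasurable.enorm.pow_const 2).pow_const r,
    Finset.mul_sum]
  exact Finset.sum_le_sum fun j _ => hC hab (hF j) (hF₂ j)

theorem SquareSumBound.lintegral_sum_indicator_ball_le (hC : SquareSumBound.{u, v} φ r 1 C)
    (hr : 0 < r) {ι : Type u} [Fintype ι] {a b : ι → ℝ} (hab : IsNonoverlapping a b)
    {κ : Type v} (J : Finset κ) {F : κ → ℝ → ℂ} (hF : ∀ j, Integrable (F j))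
    (hF₂ : ∀ j, MemLp (F j) 2) (x : ℝ) {d : ℝ} (hd : 0 < d) :
    ∫⁻ y, ∑ j ∈ J, squareSum φ a b ((Metric.ball x (2 * d)).indicator (F j)) y ^ r
      ≤ C * 2 * volume (Metric.ball x d)
        * maximalFunction volume (fun y => ∑ j ∈ J, (‖F j y‖ₑ ^ 2) ^ r) x := by
  have hle := hC hab J (fun j => (hF j).indicator (measurableSet_ball (x := x) (ε := 2 * d)))
    (fun j => (hF₂ j).indicator measurableSet_ball)
  simp only [ENNReal.rpow_one] at hle
  calc _ ≤ C * ∫⁻ y, ∑ j ∈ J, (‖(Metric.ball x (2 * d)).indicator (F j) y‖ₑ ^ 2) ^ r := hle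
    _ = C * ∫⁻ y in Metric.ball x (2 * d), ∑ j ∈ J, (‖F j y‖ₑ ^ 2) ^ r := by
        rw [← lintegral_indicator measurableSet_ball]
        congr! with y
        by_cases hy : y ∈ Metric.ball x (2 * d) <;> simp [hy, hr]
    _ ≤ C * (volume (Metric.ball x (2 * d))
          * maximalFunction volume (fun y => ∑ j ∈ J, (‖F j y‖ₑ ^ 2) ^ r) x) := by
        gcongr
        exact setLIntegral_ball_le_measure_mul_maximalFunction _
          (Metric.mem_ball_self (by positivity))
    _ = _ := by
        rw [Real.volume_ball, Real.volume_ball, ENNReal.ofReal_mul zero_le_two,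
          ENNReal.ofReal_ofNat]
        ring

theorem SquareSumBound.exists_locallyControlled (hC : SquareSumBound.{u, v} φ r 1 C)
    (hr : 1 ≤ r) :
    ∃ A : ℝ≥0, ∀ {ι : Type u} [Fintype ι] {a b : ι → ℝ}, IsNonoverlapping a b →
      ∀ {κ : Type v} (J : Finset κ) {F : κ → ℝ → ℂ}, (∀ j, Integrable (F j)) →
        (∀ j, MemLp (F j) 2) →
          LocallyControlled volume A (fun x => ∑ j ∈ J, squareSum φ a b (F j) x ^ r)
            (fun x => ∑ j ∈ J, (‖F j x‖ₑ ^ 2) ^ r) := by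
  obtain ⟨A, hA⟩ := exists_squareSum_rpow_le.{u} φ hr
  obtain ⟨D, hD⟩ := exists_lintegral_tailMeasure_le
  let K : ℝ≥0 := C * 2 + A * (1 + D)
  refine ⟨K * (1 + K), fun {ι} _ a b hab κ J F hF hF₂ => .of_forall_forall_le fun x d hd =>
    ⟨fun y => ∑ j ∈ J, squareSum φ a b ((Metric.ball x (2 * d)).indicator (F j)) y ^ r,
      (Finset.measurable_fun_sum _ fun j _ => (continuous_squareSum hab.lt
        ((hF j).indicator measurableSet_ball)).measurable.pow_const r).aemeasurable, ?_, ?_⟩⟩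
  · grw [hC.lintegral_sum_indicator_ball_le (one_pos.trans_le hr) hab J hF hF₂ x hd]
    gcongr
    exact_mod_cast (le_self_add : C * 2 ≤ K)
  · intro y hy y' hy'
    let h : ℝ → ℝ≥0∞ := fun x => ∑ j ∈ J, (‖F j x‖ₑ ^ 2) ^ r
    have htail : ∑ j ∈ J, ∫⁻ t, (‖F j t‖ₑ ^ 2) ^ r ∂tailMeasure x (2 * d)
        ≤ (1 + D) * maximalFunction volume h x := by
      have hac : tailMeasure x (2 * d) ≪ volume :=
        (withDensity_absolutelyContinuous _ _).trans Measure.restrict_le_self.absolutelyContinuous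
      rw [← lintegral_finsetSum' _ fun j _ =>
        (((hF j).aemeasurable.mono_ac hac).enorm.pow_const 2).pow_const r]
      exact (hD h x (2 * d) (by positivity)).trans (by gcongr; exact le_add_self)
    grw [Finset.sum_le_sum fun j _ => hA hab (hF j) (hF₂ j) hy hy']
    rw [← Finset.mul_sum, Finset.sum_add_distrib, Finset.sum_add_distrib, Finset.sum_add_distrib]
    grw [htail]
    refine le_trans ?_ (mul_le_mul_left (ENNReal.coe_le_coe.2 (le_add_self : A * (1 + D) ≤ K)) _)
    rw [ENNReal.coe_mul, ENNReal.coe_add, ENNReal.coe_one, mul_assoc, mul_add (1 + (D : ℝ≥0∞))]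
    gcongr
    exact le_mul_of_one_le_left' le_self_add

theorem lintegral_squareSum_rpow_ne_top (hφ : support (𝓕 ⇑φ) ⊆ Ioo 0 1) (hr : 1 ≤ r)
    {ι : Type*} [Fintype ι] {a b : ι → ℝ} (hab : IsNonoverlapping a b) {f : ℝ → ℂ}
    (hf : Integrable f) (hf₂ : MemLp f 2) :
    ∫⁻ x, squareSum φ a b f x ^ r ≠ ∞ := by
  obtain ⟨C, hC⟩ := exists_lintegral_squareSum_le hφ
  obtain ⟨B, hB, hle⟩ := exists_forall_squareSum_le (φ := φ) hab.lt hf₂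
  refine lintegral_rpow_ne_top_of_forall_le hB hle
    (ne_top_of_le_ne_top (ENNReal.mul_ne_top ENNReal.coe_ne_top ?_) (hC hab hf hf₂)) hr
  rw [lintegral_enorm_sq_eq_enorm_toLp_sq hf₂]
  finiteness

theorem lintegral_sum_squareSum_rpow_ne_top (hφ : support (𝓕 ⇑φ) ⊆ Ioo 0 1) (hr : 1 ≤ r)
    (ht : 1 ≤ t) {ι : Type*} [Fintype ι] {a b : ι → ℝ} (hab : IsNonoverlapping a b)
    {κ : Type*} (J : Finset κ) {F : κ → ℝ → ℂ} (hF : ∀ j, Integrable (F j))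
    (hF₂ : ∀ j, MemLp (F j) 2) :
    ∫⁻ x, (∑ j ∈ J, squareSum φ a b (F j) x ^ r) ^ t ≠ ∞ := by
  refine ne_top_of_le_ne_top ?_
    (lintegral_mono fun x => ENNReal.rpow_sum_le_const_mul_sum_rpow J _ ht)
  have hfactor : (J.card : ℝ≥0∞) ^ (t - 1) ≠ ∞ :=
    ENNReal.rpow_ne_top_of_nonneg (sub_nonneg.2 ht) (ENNReal.natCast_ne_top _)
  rw [lintegral_const_mul' _ _ hfactor, lintegral_finsetSum _ fun j _ =>
    ((continuous_squareSum hab.lt (hF j)).measurable.pow_const r).pow_const t]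
  simp only [← ENNReal.rpow_mul]
  exact ENNReal.mul_ne_top hfactor (ENNReal.sum_ne_top.2 fun j _ =>
    lintegral_squareSum_rpow_ne_top hφ (one_le_mul_of_one_le_of_one_le hr ht) hab (hF j) (hF₂ j))

theorem SquareSumBound.exists_of_one_le (hφ : support (𝓕 ⇑φ) ⊆ Ioo 0 1)
    (hC : SquareSumBound.{u, v} φ r 1 C) (hr : 1 ≤ r) (ht : 1 ≤ t) :
    ∃ C' : ℝ≥0, SquareSumBound.{u, v} φ r t C' := by
  obtain rfl | ht := ht.eq_or_lt
  · exact ⟨C, hC⟩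
  obtain ⟨A, hA⟩ := hC.exists_locallyControlled hr
  obtain ⟨C', hC', hmax⟩ :=
    exists_lintegral_maximalFunction_rpow_le_of_locallyControlled (volume : Measure ℝ) A ht
  refine ⟨C'.toNNReal, fun {ι} _ a b hab κ J F hF hF₂ => ?_⟩
  rw [ENNReal.coe_toNNReal hC']
  have hcont : Continuous fun x => ∑ j ∈ J, squareSum φ a b (F j) x ^ r :=
    continuous_finsetSum _ fun j _ =>
      ENNReal.continuous_rpow_const.comp (continuous_squareSum hab.lt (hF j))
  have hmeas : AEMeasurable fun x => ∑ j ∈ J, (‖F j x‖ₑ ^ 2) ^ r :=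
    Finset.aemeasurable_fun_sum _ fun j _ => ((hF j).aemeasurable.enorm.pow_const 2).pow_const r
  refine (lintegral_mono fun x => ?_).trans (hmax _ _ hcont.aemeasurable hmeas (hA hab J hF hF₂)
    (lintegral_sum_squareSum_rpow_ne_top hφ hr ht.le hab J hF hF₂))
  gcongr
  exact le_maximalFunction hcont.lowerSemicontinuous x

theorem exists_squareSumBound (hφ : support (𝓕 ⇑φ) ⊆ Ioo 0 1) (hr : 1 ≤ r) (ht : 1 ≤ t) :
    ∃ C : ℝ≥0, SquareSumBound.{u, v} φ r t C := by
  obtain ⟨C₁, hC₁⟩ := exists_lintegral_squareSum_le.{u} hφ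
  have h₁ : SquareSumBound.{u, v} φ 1 1 C₁ :=
    squareSumBound_one_of_forall_le fun hab _ => by simpa only [ENNReal.rpow_one] using hC₁ hab
  obtain ⟨C₂, hC₂⟩ := h₁.exists_of_one_le hφ le_rfl hr
  have h₂ : SquareSumBound.{u, v} φ r 1 C₂ := squareSumBound_one_of_forall_le
    fun hab _ hf hf₂ => by simpa only [one_mul] using hC₂.lintegral_rpow_mul_le hab hf hf₂
  exact h₂.exists_of_one_le hφ hr ht

end VectorValued

section TriebelLizorkin

theorem lintegral_tsum_rpow_eq_iSup {α κ : Type*} [MeasurableSpace α] {μ : Measure α} [Countable κ]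
    {h : κ → α → ℝ≥0∞} (hh : ∀ j, AEMeasurable (h j) μ) {t : ℝ} (ht : 0 < t) :
    ∫⁻ x, (∑' j, h j x) ^ t ∂μ = ⨆ J : Finset κ, ∫⁻ x, (∑ j ∈ J, h j x) ^ t ∂μ := by
  rw [← lintegral_iSup_directed fun J =>
    (Finset.aemeasurable_fun_sum J fun j _ => hh j).pow_const t]
  · refine lintegral_congr fun x => ?_
    rw [ENNReal.tsum_eq_iSup_sum]
    exact (ENNReal.orderIsoRpow t ht).map_iSup _
  · refine Monotone.directed_le fun J J' hJ x => ?_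
    dsimp only
    gcongr

theorem exists_lintegral_tsum_squareSum_rpow_le {φ : SchwartzMap ℝ ℂ}
    (hφ : support (𝓕 ⇑φ) ⊆ Ioo 0 1) {r t : ℝ} (hr : 1 ≤ r) (ht : 1 ≤ t) :
    ∃ C : ℝ≥0, ∀ {ι : Type*} [Fintype ι] {a b : ι → ℝ}, IsNonoverlapping a b →
      ∀ {κ : Type*} [Countable κ] {F : κ → ℝ → ℂ}, (∀ j, Integrable (F j)) →
        (∀ j, MemLp (F j) 2) →
          ∫⁻ x, (∑' j, squareSum φ a b (F j) x ^ r) ^ t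
            ≤ C * ∫⁻ x, (∑' j, (‖F j x‖ₑ ^ 2) ^ r) ^ t := by
  obtain ⟨C, hC⟩ := exists_squareSumBound hφ hr ht
  refine ⟨C, fun {ι} _ a b hab κ _ F hF hF₂ => ?_⟩
  rw [lintegral_tsum_rpow_eq_iSup (fun j =>
    ((continuous_squareSum hab.lt (hF j)).measurable.pow_const r).aemeasurable)
    (one_pos.trans_le ht)]
  refine iSup_le fun J => (hC hab J hF hF₂).trans ?_
  gcongr
  exact ENNReal.sum_le_tsum J

theorem exists_schwartzMap_eq_psi (Φ : SchwartzMap ℝ ℂ) (j : ℤ) :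
    ∃ P : SchwartzMap ℝ ℂ, ⇑P = psi Φ j := by
  obtain ⟨G, hG, -⟩ := exists_schwartzMap_eq_phim Φ (show (0 : ℝ) < 2 ^ j by positivity)
  obtain ⟨H, hH, -⟩ := exists_schwartzMap_eq_phim Φ (show (0 : ℝ) < 2 ^ (j - 1) by positivity)
  refine ⟨G - H, funext fun x => ?_⟩
  rw [sub_apply, hG, hH]
  simp [psi, phim, e2pi]

theorem conv_right_comm (f G P : SchwartzMap ℝ ℂ) : conv (conv f G) P = conv (conv f P) G := by
  simp only [← coe_convolution_mul]
  congr 1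
  refine (FourierTransform.fourierEquiv ℂ (SchwartzMap ℝ ℂ)).injective ?_
  ext ξ
  simp [SchwartzMap.fourier_convolution, mul_right_comm]

theorem squareSum_const_smul_conv {φ : SchwartzMap ℝ ℂ} {ι : Type*} [Fintype ι] {a b : ι → ℝ}
    (hab : ∀ m, a m < b m) (c : ℂ) (f P : SchwartzMap ℝ ℂ) (x : ℝ) :
    squareSum φ a b (c • conv f P) x
      = ‖c‖ₑ ^ 2 * ∑ m, ‖conv (conv f (phim φ (a m) (b m))) P x‖ₑ ^ 2 := by
  rw [squareSum, Finset.mul_sum]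
  refine Finset.sum_congr rfl fun m _ => ?_
  obtain ⟨G, hG, -⟩ := exists_schwartzMap_eq_phim φ (hab m)
  have hsmul : conv (c • conv f P) G x = c * conv (conv f P) G x := by
    simp only [conv, Pi.smul_apply, smul_eq_mul, mul_assoc, integral_const_mul]
  rw [← hG, hsmul, conv_right_comm, enorm_mul, mul_pow]

theorem enorm_ofReal_two_rpow (y : ℝ) : ‖(((2 : ℝ) ^ y : ℝ) : ℂ)‖ₑ = (2 : ℝ≥0∞) ^ y := by
  rw [← ofReal_norm, Complex.norm_real, Real.norm_of_nonneg (by positivity),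
    ← ENNReal.ofReal_rpow_of_pos two_pos, ENNReal.ofReal_ofNat]

theorem ennreal_mul_sqrt_rpow (c X : ℝ≥0∞) {q : ℝ} (hq : 0 ≤ q) :
    (c * X ^ (1 / 2 : ℝ)) ^ q = (c ^ 2 * X) ^ (q / 2) := by
  rw [ENNReal.mul_rpow_of_nonneg _ _ hq, ENNReal.mul_rpow_of_nonneg _ _ (by positivity),
    ← ENNReal.rpow_mul, ← ENNReal.rpow_two, ← ENNReal.rpow_mul]
  ring_nf

/-- The Littlewood–Paley block of `f` at frequency `2 ^ j` with its smoothness weight, that is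
`2 ^ (j * s) • (f ∗ ψ_j)`. -/
noncomputable def weightedBlock (Φ : ℝ → ℂ) (s : ℝ) (f : ℝ → ℂ) (j : ℤ) : ℝ → ℂ :=
  (((2 : ℝ) ^ (j * s) : ℝ) : ℂ) • conv f (psi Φ j)

theorem exists_schwartzMap_eq_weightedBlock (Φ : SchwartzMap ℝ ℂ) (s : ℝ) (f : SchwartzMap ℝ ℂ)
    (j : ℤ) : ∃ F : SchwartzMap ℝ ℂ, ⇑F = weightedBlock Φ s f j := by
  obtain ⟨P, hP⟩ := exists_schwartzMap_eq_psi Φ j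
  refine ⟨(((2 : ℝ) ^ (j * s) : ℝ) : ℂ) •
    SchwartzMap.convolution (ContinuousLinearMap.mul ℂ ℂ) f P, ?_⟩
  rw [FunLike.coe_smul, coe_convolution_mul, hP, weightedBlock]

theorem enorm_weightedBlock_sq_rpow (Φ : ℝ → ℂ) (s : ℝ) (f : ℝ → ℂ) (j : ℤ) (x q : ℝ) :
    (‖weightedBlock Φ s f j x‖ₑ ^ 2) ^ (q / 2)
      = ((2 : ℝ≥0∞) ^ ((j : ℝ) * s) * ‖conv f (psi Φ j) x‖ₑ) ^ q := by
  rw [weightedBlock, Pi.smul_apply, enorm_smul, enorm_ofReal_two_rpow, ← ENNReal.rpow_two,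
    ← ENNReal.rpow_mul, mul_div_cancel₀ q two_ne_zero]

theorem squareSum_weightedBlock_rpow {φ : SchwartzMap ℝ ℂ} {ι : Type*} [Fintype ι] {a b : ι → ℝ}
    (hab : ∀ m, a m < b m) (Φ : SchwartzMap ℝ ℂ) (s : ℝ) (f : SchwartzMap ℝ ℂ) (j : ℤ) (x : ℝ)
    {q : ℝ} (hq : 0 ≤ q) :
    squareSum φ a b (weightedBlock Φ s f j) x ^ (q / 2)
      = ((2 : ℝ≥0∞) ^ ((j : ℝ) * s) *
          (∑ m, ‖conv (conv f (phim φ (a m) (b m))) (psi Φ j) x‖ₑ ^ 2) ^ (1 / 2 : ℝ)) ^ q := by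
  obtain ⟨P, hP⟩ := exists_schwartzMap_eq_psi Φ j
  rw [ennreal_mul_sqrt_rpow _ _ hq, weightedBlock, ← hP, squareSum_const_smul_conv hab,
    enorm_ofReal_two_rpow]

theorem Admissible.isNonoverlapping {N : ℕ} {a b : Fin N → ℝ} (h : Admissible a b) :
    IsNonoverlapping a b :=
  ⟨h.1, fun m m' hne => (h.2.2 m m' hne).mono Ioo_subset_Icc_self Ioo_subset_Icc_self⟩

theorem statement8_general (φ Φ : SchwartzMap ℝ ℂ) (hφ : support (𝓕 ⇑φ) ⊆ Ioo 0 1)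
    (p q s : ℝ) (hq : 2 ≤ q) (hqp : q ≤ p) :
    ∃ C : ℝ, 0 < C ∧ ∀ {ι : Type*} [Fintype ι] {a b : ι → ℝ}, IsNonoverlapping a b →
      ∀ f : SchwartzMap ℝ ℂ,
        (∫⁻ x, ((∑' j : ℤ, ((2 : ℝ≥0∞) ^ ((j : ℝ) * s) *
            (∑ m, ‖conv (conv f (phim φ (a m) (b m))) (psi Φ j) x‖ₑ ^ 2) ^ (1 / 2 : ℝ)) ^ q)
              ^ (1 / q)) ^ p) ^ (1 / p)
        ≤ ENNReal.ofReal C *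
          (∫⁻ x, ((∑' j : ℤ, ((2 : ℝ≥0∞) ^ ((j : ℝ) * s) * ‖conv f (psi Φ j) x‖ₑ) ^ q)
            ^ (1 / q)) ^ p) ^ (1 / p) := by
  have hq₀ : 0 < q := two_pos.trans_le hq
  have hp₀ : 0 < p := hq₀.trans_le hqp
  obtain ⟨C, hC⟩ := exists_lintegral_tsum_squareSum_rpow_le hφ (r := q / 2) (t := p / q)
    (by linarith) ((one_le_div hq₀).2 hqp)
  refine ⟨(C + 1 : ℝ≥0) ^ (1 / p), by positivity, fun {ι} _ a b hab f => ?_⟩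
  choose F hF using exists_schwartzMap_eq_weightedBlock Φ s f
  have hbound := hC hab (fun j => (F j).integrable) (fun j => (F j).memLp 2 volume)
  simp only [← squareSum_weightedBlock_rpow hab.lt Φ s f _ _ hq₀.le,
    ← enorm_weightedBlock_sq_rpow, ← hF, ← ENNReal.rpow_mul, one_div_mul_eq_div]
  grw [hbound, ENNReal.mul_rpow_of_nonneg _ _ (by positivity),
    ← ENNReal.ofReal_rpow_of_nonneg NNReal.zero_le_coe (by positivity), ENNReal.ofReal_coe_nnreal]
  gcongr
  exact le_self_add

end TriebelLizorkin

/-- uniform boundedness of the Rubio de Francia family WITHOUT rotations on the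
homogeneous Triebel–Lizorkin space `Ḟ^s_{pq}`, for `2 ≤ q ≤ p < ∞` and `s ≥ 0`. -/
theorem statement8 (φ Φ : SchwartzMap ℝ ℂ)
    (hφ : Function.support (𝓕 ⇑φ) ⊆ Set.Ioo 0 1)
    (hΦsupp : Function.support (𝓕 ⇑Φ) ⊆ Set.Icc (-2) 2)
    (hΦone : ∀ ξ ∈ Set.Icc (-1:ℝ) 1, 𝓕 ⇑Φ ξ = 1)
    (p q s : ℝ) (hq : 2 ≤ q) (hqp : q ≤ p) (hs : 0 ≤ s) :
    ∃ C : ℝ, 0 < C ∧ ∀ (N : ℕ) (a b : Fin N → ℝ), Admissible a b →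
      ∀ f : SchwartzMap ℝ ℂ,
        (∫⁻ x : ℝ, ((∑' j : ℤ,
            ((2 : ℝ≥0∞) ^ ((j : ℝ) * s) *
              (∑ m : Fin N,
                (‖conv (conv ⇑f (phim ⇑φ (a m) (b m))) (psi ⇑Φ j) x‖₊ : ℝ≥0∞) ^ 2)
                  ^ (1/2 : ℝ)) ^ q) ^ (1/q)) ^ p) ^ (1/p)
        ≤ ENNReal.ofReal C *
          (∫⁻ x : ℝ, ((∑' j : ℤ,
              ((2 : ℝ≥0∞) ^ ((j : ℝ) * s) *
                (‖conv ⇑f (psi ⇑Φ j) x‖₊ : ℝ≥0∞)) ^ q) ^ (1/q)) ^ p) ^ (1/p) := by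
  obtain ⟨C, hC, hbound⟩ := statement8_general φ Φ hφ p q s hq hqp
  exact ⟨C, hC, fun _ _ _ hab f => hbound hab.isNonoverlapping f⟩
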